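/- arXiv:1611.10192 — 2 statements merged into one kernel-verified Lean document; each statement's English description precedes it below -/
import Mathlib

section
/- Let ν ≥ 0 be an integer and let a, b > 0 with a ≠ b be two zeros of J_ν (i.e. J_ν(a) = J_ν(b) = 0). Then ∫_0^1 r^3 J_ν(a r) J_ν(b r) dr = 4 a b J_{ν+1}(a) J_{ν+1}(b) / (a^2 − b^2)^2. -/
open MeasureTheory

/-- Bessel function of the first kind of integer order `ν`, defined by its
everywhere-convergent power series. -/
noncomputable def besselJ (ν : ℕ) (x : ℝ) : ℝ :=
  ∑' m : ℕ, ((-1 : ℝ) ^ m / ((Nat.factorial m : ℝ) * (Nat.factorial (m + ν) : ℝ)))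
    * (x / 2) ^ (2 * m + ν)

/-!
The Euler operator `r * d/dr` maps `J_ν(a r)` and `J_{ν+1}(a r)` to combinations of one another.
Integrating the derivative of `r ^ (k + 1) * J_μ(a r) * J_ν(b r)` over `[0, x]` therefore gives a
linear relation between the moments `∫ r ^ k * J_μ(a r) * J_ν(b r)` whose orders `μ, ν` differ by at
most one.

When `J_ν(a x) = J_ν(b x) = 0`, the relations for `k = 0` say that the first moments of
`J_ν(a r) J_ν(b r)` and `J_{ν+1}(a r) J_{ν+1}(b r)` vanish. Those for `k = 1` are then a `2 × 2`
system for the two mixed second moments, with `x ^ 2 * J_{ν+1}(a x) * J_{ν+1}(b x)` as the only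
inhomogeneous term, and those for `k = 2` express the third moment through the mixed second ones.
-/

open scoped Nat NNReal

theorem hasDerivAt_tsum_mul_pow {𝕜 : Type*} [NontriviallyNormedField 𝕜] [CompleteSpace 𝕜]
    {c : ℕ → 𝕜} (hc : ∀ r : ℝ≥0, Summable fun m ↦ ‖c m‖ * r ^ m) (y : 𝕜) :
    HasDerivAt (fun z ↦ ∑' m, c m * z ^ m) (∑' m : ℕ, (m + 1) * c (m + 1) * y ^ m) y := by
  set p := FormalMultilinearSeries.ofScalars 𝕜 c with hp
  have radius_eq_top : p.radius = ⊤ :=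
    p.radius_eq_top_of_summable_norm fun r ↦ by
      simpa only [hp, FormalMultilinearSeries.ofScalars_norm] using hc r
  have hasFPowerSeries : HasFPowerSeriesOnBall p.sum p 0 ⊤ :=
    radius_eq_top ▸ p.hasFPowerSeriesOnBall (by simp [radius_eq_top])
  have sum_eq : p.sum = fun z ↦ ∑' m, c m * z ^ m :=
    FormalMultilinearSeries.ofScalarsSum_eq_tsum c
  have hasSum_deriv : HasSum (fun m : ℕ ↦ (m + 1) * c (m + 1) * y ^ m) (deriv p.sum y) := by
    have := (hasFPowerSeries.fderiv.hasSum (y := y) (by simp)).mapL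
      (ContinuousLinearMap.apply 𝕜 𝕜 (1 : 𝕜))
    simpa [hp, FormalMultilinearSeries.coeff_ofScalars, mul_comm] using this
  rw [← sum_eq, hasSum_deriv.tsum_eq]
  exact (hasFPowerSeries.differentiableOn.differentiableAt (by simp)).hasDerivAt

/-- The Bessel–Clifford function of order `ν`. It is entire, and
`J_ν(x) = (x / 2) ^ ν * C_ν(-(x / 2) ^ 2)`, which is how the calculus of `besselJ` is obtained. -/
noncomputable def besselClifford (ν : ℕ) (y : ℝ) : ℝ :=
  ∑' m : ℕ, ((m ! * (m + ν)! : ℝ)⁻¹) * y ^ m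

theorem summable_norm_besselClifford (ν : ℕ) (r : ℝ≥0) :
    Summable fun m : ℕ ↦ ‖((m ! * (m + ν)! : ℝ)⁻¹)‖ * r ^ m := by
  refine .of_nonneg_of_le (fun m ↦ by positivity) (fun m ↦ ?_)
    (Real.summable_pow_div_factorial r)
  have one_le : (1 : ℝ) ≤ (m + ν)! := mod_cast (m + ν).factorial_pos
  rw [norm_inv, norm_mul, Real.norm_natCast, Real.norm_natCast, inv_mul_eq_div]
  gcongr
  exact le_mul_of_one_le_right (by positivity) one_le

theorem summable_besselClifford (ν : ℕ) (y : ℝ) :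
    Summable fun m : ℕ ↦ ((m ! * (m + ν)! : ℝ)⁻¹) * y ^ m :=
  .of_norm <| by
    simpa only [norm_mul, norm_pow, coe_nnnorm] using summable_norm_besselClifford ν ‖y‖₊

theorem hasDerivAt_besselClifford (ν : ℕ) (y : ℝ) :
    HasDerivAt (besselClifford ν) (besselClifford (ν + 1) y) y := by
  refine (hasDerivAt_tsum_mul_pow (summable_norm_besselClifford ν) y).congr_deriv ?_
  refine tsum_congr fun m ↦ ?_
  rw [Nat.factorial_succ, Nat.add_right_comm, add_assoc m ν 1]
  push_cast
  field_simp

theorem besselClifford_eq_add (ν : ℕ) (y : ℝ) :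
    besselClifford ν y = (ν + 1) * besselClifford (ν + 1) y + y * besselClifford (ν + 2) y := by
  have summable_succ := (summable_besselClifford (ν + 1) y).mul_left ((ν : ℝ) + 1)
  unfold besselClifford
  rw [← tsum_mul_left, ← tsum_mul_left, (summable_besselClifford ν y).tsum_eq_zero_add,
    summable_succ.tsum_eq_zero_add, add_assoc,
    ← ((summable_nat_add_iff 1).2 summable_succ).tsum_add
      ((summable_besselClifford (ν + 2) y).mul_left y)]
  congr 1
  · simp only [zero_add, Nat.factorial_zero, Nat.factorial_succ ν, pow_zero]
    push_cast
    field_simp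
  · refine tsum_congr fun m ↦ ?_
    rw [show m + 1 + (ν + 1) = m + ν + 1 + 1 by ring, show m + 1 + ν = m + ν + 1 by ring,
      show m + (ν + 2) = m + ν + 1 + 1 by ring, Nat.factorial_succ (m + ν + 1),
      Nat.factorial_succ m]
    push_cast
    field_simp
    ring

theorem besselJ_eq_besselClifford (ν : ℕ) (x : ℝ) :
    besselJ ν x = (x / 2) ^ ν * besselClifford ν (-(x / 2) ^ 2) := by
  rw [besselJ, besselClifford, ← tsum_mul_left]
  refine tsum_congr fun m ↦ ?_
  rw [pow_add, pow_mul, neg_pow ((x / 2) ^ 2)]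
  ring

theorem hasDerivAt_besselJ (ν : ℕ) (x : ℝ) :
    HasDerivAt (besselJ ν) (ν * (x / 2) ^ (ν - 1) / 2 * besselClifford ν (-(x / 2) ^ 2) -
      besselJ (ν + 1) x) x := by
  have half : HasDerivAt (fun x : ℝ ↦ x / 2) (1 / 2) x := (hasDerivAt_id x).div_const 2
  have clifford := (hasDerivAt_besselClifford ν _).comp x (half.pow 2).neg
  rw [funext (besselJ_eq_besselClifford ν)]
  refine ((half.pow ν).mul clifford).congr_deriv ?_
  simp only [besselJ_eq_besselClifford, Function.comp, Pi.pow_apply, Pi.neg_apply]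
  ring

theorem differentiable_besselJ (ν : ℕ) : Differentiable ℝ (besselJ ν) :=
  fun x ↦ (hasDerivAt_besselJ ν x).differentiableAt

@[fun_prop]
theorem continuous_besselJ (ν : ℕ) : Continuous (besselJ ν) :=
  (differentiable_besselJ ν).continuous

theorem mul_besselJ_add_mul_besselJ_add_two (ν : ℕ) (x : ℝ) :
    x * besselJ ν x + x * besselJ (ν + 2) x = 2 * (ν + 1) * besselJ (ν + 1) x := by
  simp only [besselJ_eq_besselClifford, besselClifford_eq_add ν]
  ring

/-- The ladder relation `x * (d/dx) J_μ(x) = α * J_μ(x) + σ * x * J_ρ(x)` from order `μ` to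
order `ρ`. It uses the Euler operator `x * d/dx`, so that it has no singularity at `x = 0`. -/
def BesselLadder (μ ρ : ℕ) (α σ : ℝ) : Prop :=
  ∀ x, x * deriv (besselJ μ) x = α * besselJ μ x + σ * (x * besselJ ρ x)

theorem besselLadder_raising (ν : ℕ) : BesselLadder ν (ν + 1) ν (-1) := by
  intro x
  rw [(hasDerivAt_besselJ ν x).deriv, besselJ_eq_besselClifford ν]
  cases ν with
  | zero => simp
  | succ n =>
    rw [Nat.add_sub_cancel, pow_succ (x / 2) n]
    ring

theorem besselLadder_lowering (ν : ℕ) : BesselLadder (ν + 1) ν (-(ν + 1)) 1 := by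
  intro x
  rw [besselLadder_raising (ν + 1) x]
  push_cast
  linear_combination -mul_besselJ_add_mul_besselJ_add_two ν x

theorem mul_deriv_comp_mul_left {𝕜 : Type*} [NontriviallyNormedField 𝕜] {f F : 𝕜 → 𝕜}
    (hf : ∀ x, x * deriv f x = F x) (a r : 𝕜) :
    r * deriv (fun s ↦ f (a * s)) r = F (a * r) := by
  rw [deriv_comp_mul_left, smul_eq_mul, ← hf]
  ring

theorem integral_pow_mul_leibniz {f g F G : ℝ → ℝ} (k : ℕ) (x : ℝ)
    (hf : Differentiable ℝ f) (hg : Differentiable ℝ g) (hF : Continuous F) (hG : Continuous G)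
    (hfF : ∀ r, r * deriv f r = F r) (hgG : ∀ r, r * deriv g r = G r) :
    ∫ r in (0 : ℝ)..x, r ^ k * ((k + 1) * (f r * g r) + F r * g r + f r * G r) =
      x ^ (k + 1) * (f x * g x) := by
  have hasDerivAt_primitive (r : ℝ) : HasDerivAt (fun s ↦ s ^ (k + 1) * (f s * g s))
      (r ^ k * ((k + 1) * (f r * g r) + F r * g r + f r * G r)) r := by
    refine ((hasDerivAt_pow (k + 1) r).mul
      ((hf r).hasDerivAt.mul (hg r).hasDerivAt)).congr_deriv ?_
    rw [← hfF, ← hgG, Nat.add_sub_cancel, Pi.mul_apply]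
    push_cast
    ring
  have f_cont := hf.continuous
  have g_cont := hg.continuous
  rw [intervalIntegral.integral_eq_sub_of_hasDerivAt (fun r _ ↦ hasDerivAt_primitive r)
    (Continuous.intervalIntegrable (by fun_prop) _ _)]
  simp

/-- The moment `∫₀ˣ rᵏ J_μ(a r) J_ν(b r) dr`: the unknowns of the linear relations that integration
by parts produces. -/
noncomputable def besselMoment (k μ ν : ℕ) (a b x : ℝ) : ℝ :=
  ∫ r in (0 : ℝ)..x, r ^ k * (besselJ μ (a * r) * besselJ ν (b * r))

theorem BesselLadder.besselMoment_recurrence {μ ρ ν κ : ℕ} {α β σ τ : ℝ}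
    (hμ : BesselLadder μ ρ α σ) (hν : BesselLadder ν κ β τ) (k : ℕ) (a b x : ℝ) :
    (k + 1 + α + β) * besselMoment k μ ν a b x + σ * a * besselMoment (k + 1) ρ ν a b x +
        τ * b * besselMoment (k + 1) μ κ a b x =
      x ^ (k + 1) * (besselJ μ (a * x) * besselJ ν (b * x)) := by
  have integrable (c : ℝ) (k μ ν : ℕ) : IntervalIntegrable
      (fun r ↦ c * (r ^ k * (besselJ μ (a * r) * besselJ ν (b * r)))) volume 0 x :=
    Continuous.intervalIntegrable (by fun_prop) _ _
  rw [← integral_pow_mul_leibniz k x (f := fun r ↦ besselJ μ (a * r))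
    (g := fun r ↦ besselJ ν (b * r))
    ((differentiable_besselJ μ).comp (differentiable_id.const_mul a))
    ((differentiable_besselJ ν).comp (differentiable_id.const_mul b)) (by fun_prop) (by fun_prop)
    (mul_deriv_comp_mul_left hμ a) (mul_deriv_comp_mul_left hν b)]
  simp only [besselMoment, ← intervalIntegral.integral_const_mul]
  rw [← intervalIntegral.integral_add (integrable ..) (integrable ..),
    ← intervalIntegral.integral_add ((integrable ..).add (integrable ..)) (integrable ..)]
  refine intervalIntegral.integral_congr fun r _ ↦ ?_
  ring

theorem besselMoment_recurrence_self_succ (k ν : ℕ) (a b x : ℝ) :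
    k * besselMoment k ν (ν + 1) a b x + b * besselMoment (k + 1) ν ν a b x -
        a * besselMoment (k + 1) (ν + 1) (ν + 1) a b x =
      x ^ (k + 1) * (besselJ ν (a * x) * besselJ (ν + 1) (b * x)) := by
  rw [← (besselLadder_raising ν).besselMoment_recurrence (besselLadder_lowering ν)]
  ring

theorem besselMoment_recurrence_succ_self (k ν : ℕ) (a b x : ℝ) :
    k * besselMoment k (ν + 1) ν a b x + a * besselMoment (k + 1) ν ν a b x -
        b * besselMoment (k + 1) (ν + 1) (ν + 1) a b x =
      x ^ (k + 1) * (besselJ (ν + 1) (a * x) * besselJ ν (b * x)) := by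
  rw [← (besselLadder_lowering ν).besselMoment_recurrence (besselLadder_raising ν)]
  ring

theorem besselMoment_recurrence_self_self (k ν : ℕ) (a b x : ℝ) :
    (k + 1 + 2 * ν) * besselMoment k ν ν a b x - a * besselMoment (k + 1) (ν + 1) ν a b x -
        b * besselMoment (k + 1) ν (ν + 1) a b x =
      x ^ (k + 1) * (besselJ ν (a * x) * besselJ ν (b * x)) := by
  rw [← (besselLadder_raising ν).besselMoment_recurrence (besselLadder_raising ν)]
  ring

theorem besselMoment_recurrence_succ_succ (k ν : ℕ) (a b x : ℝ) :
    (k - 1 - 2 * ν) * besselMoment k (ν + 1) (ν + 1) a b x +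
        a * besselMoment (k + 1) ν (ν + 1) a b x + b * besselMoment (k + 1) (ν + 1) ν a b x =
      x ^ (k + 1) * (besselJ (ν + 1) (a * x) * besselJ (ν + 1) (b * x)) := by
  rw [← (besselLadder_lowering ν).besselMoment_recurrence (besselLadder_lowering ν)]
  ring

theorem sq_sub_sq_mul_besselMoment (k ν : ℕ) (a b x : ℝ) :
    (a ^ 2 - b ^ 2) * besselMoment (k + 1) ν ν a b x =
      x ^ (k + 1) * (a * besselJ (ν + 1) (a * x) * besselJ ν (b * x) -
          b * besselJ ν (a * x) * besselJ (ν + 1) (b * x)) -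
        k * (a * besselMoment k (ν + 1) ν a b x - b * besselMoment k ν (ν + 1) a b x) := by
  linear_combination
    a * besselMoment_recurrence_succ_self k ν a b x -
      b * besselMoment_recurrence_self_succ k ν a b x

theorem sq_sub_sq_mul_besselMoment_succ (k ν : ℕ) (a b x : ℝ) :
    (a ^ 2 - b ^ 2) * besselMoment (k + 1) (ν + 1) (ν + 1) a b x =
      x ^ (k + 1) * (b * besselJ (ν + 1) (a * x) * besselJ ν (b * x) -
          a * besselJ ν (a * x) * besselJ (ν + 1) (b * x)) -
        k * (b * besselMoment k (ν + 1) ν a b x - a * besselMoment k ν (ν + 1) a b x) := by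
  linear_combination
    b * besselMoment_recurrence_succ_self k ν a b x -
      a * besselMoment_recurrence_self_succ k ν a b x

section Zeros

variable {ν : ℕ} {a b x : ℝ}

theorem besselMoment_one_eq_zero (hab : a ^ 2 ≠ b ^ 2) (hJa : besselJ ν (a * x) = 0)
    (hJb : besselJ ν (b * x) = 0) : besselMoment 1 ν ν a b x = 0 := by
  simpa [hJa, hJb, sub_ne_zero.2 hab] using sq_sub_sq_mul_besselMoment 0 ν a b x

theorem besselMoment_one_succ_eq_zero (hab : a ^ 2 ≠ b ^ 2) (hJa : besselJ ν (a * x) = 0)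
    (hJb : besselJ ν (b * x) = 0) : besselMoment 1 (ν + 1) (ν + 1) a b x = 0 := by
  simpa [hJa, hJb, sub_ne_zero.2 hab] using sq_sub_sq_mul_besselMoment_succ 0 ν a b x

theorem sq_sub_sq_mul_besselMoment_two_sub (hab : a ^ 2 ≠ b ^ 2) (hJa : besselJ ν (a * x) = 0)
    (hJb : besselJ ν (b * x) = 0) :
    (a ^ 2 - b ^ 2) * (a * besselMoment 2 (ν + 1) ν a b x - b * besselMoment 2 ν (ν + 1) a b x) =
      -(2 * a * b * x ^ 2 * besselJ (ν + 1) (a * x) * besselJ (ν + 1) (b * x)) := by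
  have self_self : a * besselMoment 2 (ν + 1) ν a b x + b * besselMoment 2 ν (ν + 1) a b x = 0 := by
    have recurrence := besselMoment_recurrence_self_self 1 ν a b x
    rw [besselMoment_one_eq_zero hab hJa hJb, hJa] at recurrence
    linear_combination -recurrence
  have succ_succ : a * besselMoment 2 ν (ν + 1) a b x + b * besselMoment 2 (ν + 1) ν a b x =
      x ^ 2 * (besselJ (ν + 1) (a * x) * besselJ (ν + 1) (b * x)) := by
    have recurrence := besselMoment_recurrence_succ_succ 1 ν a b x
    rw [besselMoment_one_succ_eq_zero hab hJa hJb] at recurrence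
    linear_combination recurrence
  linear_combination (a ^ 2 + b ^ 2) * self_self - 2 * a * b * succ_succ

theorem stmt2_general (hab : a ^ 2 ≠ b ^ 2) (hJa : besselJ ν (a * x) = 0)
    (hJb : besselJ ν (b * x) = 0) :
    ∫ r in (0 : ℝ)..x, r ^ 3 * besselJ ν (a * r) * besselJ ν (b * r) =
      4 * a * b * x ^ 2 * besselJ (ν + 1) (a * x) * besselJ (ν + 1) (b * x) /
        (a ^ 2 - b ^ 2) ^ 2 := by
  have integral_eq : ∫ r in (0 : ℝ)..x, r ^ 3 * besselJ ν (a * r) * besselJ ν (b * r) =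
      besselMoment 3 ν ν a b x := by
    simp only [besselMoment, mul_assoc]
  have third_moment : (a ^ 2 - b ^ 2) * besselMoment 3 ν ν a b x =
      -2 * (a * besselMoment 2 (ν + 1) ν a b x - b * besselMoment 2 ν (ν + 1) a b x) := by
    have lommel := sq_sub_sq_mul_besselMoment 2 ν a b x
    rw [hJa, hJb] at lommel
    push_cast at lommel
    linear_combination lommel
  rw [integral_eq, eq_div_iff (pow_ne_zero 2 (sub_ne_zero.2 hab))]
  linear_combination
    (a ^ 2 - b ^ 2) * third_moment - 2 * sq_sub_sq_mul_besselMoment_two_sub hab hJa hJb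

end Zeros

/-- If `a ≠ b` are positive zeros of `J_ν` then
`∫_0^1 r^3 J_ν(ar) J_ν(br) dr = 4ab J_{ν+1}(a) J_{ν+1}(b) / (a² - b²)²`. -/
theorem stmt2 (ν : ℕ) (a b : ℝ) (ha : 0 < a) (hb : 0 < b) (hab : a ≠ b)
    (hJa : besselJ ν a = 0) (hJb : besselJ ν b = 0) :
    ∫ r in (0 : ℝ)..1, r ^ 3 * besselJ ν (a * r) * besselJ ν (b * r) =
      4 * a * b * besselJ (ν + 1) a * besselJ (ν + 1) b / (a ^ 2 - b ^ 2) ^ 2 := by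
  have sq_ne_sq : a ^ 2 ≠ b ^ 2 := mt (pow_left_inj₀ ha.le hb.le two_ne_zero).1 hab
  simpa using stmt2_general (ν := ν) (x := 1) sq_ne_sq (by rwa [mul_one]) (by rwa [mul_one])
end

section
/- Let (j_{0,k})_{k ≥ 1} denote the strictly increasing enumeration of the positive zeros of J_0, let (ω_k)_{k ≥ 1} be the strictly increasing enumeration of the set {j_{0,n}^2 − j_{0,p}^2 : p ∈ {1, 2, 3}, n ≥ p + 1}, and set ω_{−k} := −ω_k for k ≥ 1. Then for every T > 0 there exist constants 0 < m ≤ M such that for every finitely supported family (c_k)_{k ∈ ℤ, k ≠ 0} of complex numbers, m ∑_{k ≠ 0} |c_k|^2 ≤ ∫_0^T |∑_{k ≠ 0} c_k e^{i ω_k t}|^2 dt ≤ M ∑_{k ≠ 0} |c_k|^2. (Consequently the family {t ↦ e^{i ω_k t} : k ∈ ℤ, k ≠ 0} is a Riesz basis of the closure of its linear span in L^2((0,T); ℂ).) -/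
open MeasureTheory Complex

/-!
Write `J_ν(x) = (x / 2) ^ ν * F_ν((x / 2) ^ 2)`. The relations `F_ν' = -F_{ν+1}` and
`(y^{ν+1} F_{ν+1})' = y^ν F_ν` force consecutive zeros `a < b` of `F_ν` to satisfy
`a ≤ (b - a) ^ 2`, so the gaps between consecutive squared zeros of `J_ν` tend to infinity. Hence
all frequencies `±(j_n² - j_p²)` lie in a sumset `A + F` with `F` finite and the gaps of
`A = {±j_n²}` tending to infinity.

Outside a finite part of `A`, the translates `a + F` are far apart. Their exponential sums are then
nearly orthogonal for the weight `t (T - t)`, whose Fourier transform decays quadratically, and each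
of them satisfies a lower bound independent of `a`, because translating the frequencies does not
change the modulus of the sum. The finitely many remaining frequencies are added one at a time: the
difference operator `f ↦ f(· + h) - e^{iμh} f` removes the frequency `μ` at the cost of an
arbitrarily short time. The upper bound only requires the frequencies to be separated.
-/

section Bessel

open Filter Set
open scoped Nat Topology

lemma hasDerivAt_tsum_mul_pow_s10 {a : ℕ → ℝ} (ha : ∀ m, |a m| ≤ 1 / (m ! : ℝ)) (y : ℝ) :
    HasDerivAt (fun z : ℝ ↦ ∑' m : ℕ, a m * z ^ m) (∑' m : ℕ, a m * (m * y ^ (m - 1))) y := by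
  set R := |y| + 1
  have hu : Summable fun m : ℕ ↦ 1 / (m ! : ℝ) * (m * R ^ (m - 1)) := by
    rw [← summable_nat_add_iff 1]
    refine (Real.summable_pow_div_factorial R).congr fun m ↦ ?_
    rw [Nat.factorial_succ, Nat.add_sub_cancel]
    push_cast
    field
  refine hasDerivAt_tsum_of_isPreconnected (t := Metric.ball 0 R) (y₀ := 0) hu Metric.isOpen_ball
    (convex_ball 0 R).isPreconnected (fun m z _ ↦ (hasDerivAt_pow m z).const_mul (a m))
    (fun m z hz ↦ ?_) (Metric.mem_ball_self (by positivity)) ?_ (by simp [R])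
  · have hzR : |z| ≤ R := (mem_ball_zero_iff.1 hz).le
    rw [Real.norm_eq_abs, abs_mul, abs_mul, abs_pow, Nat.abs_cast]
    gcongr
    exact ha m
  · exact summable_of_ne_finset_zero (s := {0}) fun m hm ↦ by
      simp [Finset.notMem_singleton.1 hm]

lemma summable_mul_pow {a : ℕ → ℝ} (ha : ∀ m, |a m| ≤ 1 / (m ! : ℝ)) (y : ℝ) :
    Summable fun m : ℕ ↦ a m * y ^ m := by
  refine Summable.of_norm_bounded (Real.summable_pow_div_factorial |y|) fun m ↦ ?_
  rw [Real.norm_eq_abs, abs_mul, abs_pow, div_eq_mul_one_div, mul_comm]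
  gcongr
  exact ha m

/-- Coefficients of the power series of `besselReduced ν`. -/
noncomputable def besselCoeff (ν m : ℕ) : ℝ := (-1) ^ m / (m ! * (m + ν)!)

/-- The entire function `F_ν` with `J_ν(x) = (x / 2) ^ ν * F_ν((x / 2) ^ 2)`. In the variable
`y = (x / 2) ^ 2` the squared zeros of `J_ν` become, up to the factor `4`, zeros of `F_ν`. -/
noncomputable def besselReduced (ν : ℕ) (y : ℝ) : ℝ := ∑' m : ℕ, besselCoeff ν m * y ^ m

lemma abs_besselCoeff_le (ν m : ℕ) : |besselCoeff ν m| ≤ 1 / (m ! : ℝ) := by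
  have h : (1 : ℝ) ≤ (m + ν)! := mod_cast (m + ν).factorial_pos
  rw [besselCoeff, abs_div, abs_pow, abs_neg, abs_one, one_pow, abs_of_nonneg (by positivity)]
  gcongr
  exact le_mul_of_one_le_right (by positivity) h

lemma succ_mul_besselCoeff_succ (ν m : ℕ) :
    (m + 1) * besselCoeff ν (m + 1) = -besselCoeff (ν + 1) m := by
  rw [besselCoeff, besselCoeff, Nat.factorial_succ, add_right_comm m 1 ν, add_assoc m ν 1, pow_succ]
  push_cast
  field

lemma besselCoeff_eq_mul_succ (ν m : ℕ) :
    besselCoeff ν m = (m + ν + 1) * besselCoeff (ν + 1) m := by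
  rw [besselCoeff, besselCoeff, ← add_assoc m ν 1, Nat.factorial_succ (m + ν)]
  push_cast
  field

lemma besselJ_eq_mul_besselReduced (ν : ℕ) (x : ℝ) :
    besselJ ν x = (x / 2) ^ ν * besselReduced ν ((x / 2) ^ 2) := by
  rw [besselJ, besselReduced, ← tsum_mul_left]
  refine tsum_congr fun m ↦ ?_
  rw [besselCoeff, pow_add, pow_mul]
  ring

lemma besselJ_eq_zero_iff {x : ℝ} (hx : 0 < x) (ν : ℕ) :
    besselJ ν x = 0 ↔ besselReduced ν (x ^ 2 / 4) = 0 := by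
  rw [besselJ_eq_mul_besselReduced, mul_eq_zero_iff_left (by positivity), div_pow]
  norm_num

lemma tsum_besselCoeff_mul_deriv (ν : ℕ) (y : ℝ) :
    ∑' m : ℕ, besselCoeff ν m * (m * y ^ (m - 1)) = -besselReduced (ν + 1) y := by
  have hshift (m : ℕ) : besselCoeff ν (m + 1) * ((m + 1 : ℕ) * y ^ (m + 1 - 1)) =
      -(besselCoeff (ν + 1) m * y ^ m) := by
    rw [Nat.add_sub_cancel, ← neg_mul, ← succ_mul_besselCoeff_succ]
    push_cast
    ring
  have hsum := (summable_mul_pow (abs_besselCoeff_le (ν + 1)) y).neg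
  rw [((summable_nat_add_iff 1).1 (hsum.congr fun m ↦ (hshift m).symm)).tsum_eq_zero_add,
    tsum_congr hshift, tsum_neg, besselReduced]
  simp

lemma hasDerivAt_besselReduced (ν : ℕ) (y : ℝ) :
    HasDerivAt (besselReduced ν) (-besselReduced (ν + 1) y) y := by
  rw [← tsum_besselCoeff_mul_deriv]
  exact hasDerivAt_tsum_mul_pow_s10 (abs_besselCoeff_le ν) y

lemma besselReduced_recurrence (ν : ℕ) (y : ℝ) :
    (ν + 1) * besselReduced (ν + 1) y - y * besselReduced (ν + 2) y = besselReduced ν y := by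
  have hs (k : ℕ) := summable_mul_pow (abs_besselCoeff_le k) y
  have hterm (m : ℕ) : besselCoeff (ν + 1) m * (m * y ^ (m - 1)) * y =
      besselCoeff ν m * y ^ m - (ν + 1) * (besselCoeff (ν + 1) m * y ^ m) := by
    rw [besselCoeff_eq_mul_succ ν m]
    rcases m with _ | m
    · simp
    · rw [Nat.add_sub_cancel, pow_succ]
      push_cast
      ring
  have h : ∑' m : ℕ, _ = ∑' m : ℕ, _ := tsum_congr hterm
  rw [tsum_mul_right, tsum_besselCoeff_mul_deriv, (hs ν).tsum_sub ((hs (ν + 1)).mul_left _),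
    tsum_mul_left] at h
  simp only [besselReduced] at h ⊢
  linarith

lemma hasDerivAt_pow_mul_besselReduced (ν : ℕ) (y : ℝ) :
    HasDerivAt (fun z ↦ z ^ (ν + 1) * besselReduced (ν + 1) z) (y ^ ν * besselReduced ν y) y := by
  refine ((hasDerivAt_pow (ν + 1) y).mul (hasDerivAt_besselReduced (ν + 1) y)).congr_deriv ?_
  rw [← besselReduced_recurrence ν y, Nat.add_sub_cancel, pow_succ]
  push_cast
  ring

lemma continuous_besselReduced (ν : ℕ) : Continuous (besselReduced ν) :=
  continuous_iff_continuousAt.2 fun y ↦ (hasDerivAt_besselReduced ν y).continuousAt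

lemma exists_isLocalExtr_forall_abs_le {f : ℝ → ℝ} {a b : ℝ} (hab : a < b)
    (hf : ContinuousOn f (Icc a b)) (ha : f a = 0) (hb : f b = 0) (hne : ∃ x ∈ Icc a b, f x ≠ 0) :
    ∃ ξ ∈ Ioo a b, f ξ ≠ 0 ∧ IsLocalExtr f ξ ∧ ∀ x ∈ Icc a b, |f x| ≤ |f ξ| := by
  obtain ⟨ξ, hξ, hmax⟩ := isCompact_Icc.exists_isMaxOn (nonempty_Icc.2 hab.le) hf.abs
  obtain ⟨x₀, hx₀, hfx₀⟩ := hne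
  have hfξ : f ξ ≠ 0 := abs_pos.1 ((abs_pos.2 hfx₀).trans_le (hmax hx₀))
  have hξab : ξ ∈ Ioo a b :=
    ⟨hξ.1.lt_of_ne (by rintro rfl; exact hfξ ha), hξ.2.lt_of_ne (by rintro rfl; exact hfξ hb)⟩
  have hnear : ∀ᶠ x in 𝓝 ξ, |f x| ≤ |f ξ| := by
    filter_upwards [Icc_mem_nhds hξab.1 hξab.2] with x hx using hmax hx
  refine ⟨ξ, hξab, hfξ, ?_, fun x hx ↦ hmax hx⟩
  rcases le_total 0 (f ξ) with h | h
  · exact Or.inr (hnear.mono fun x hx ↦ (le_abs_self _).trans (hx.trans_eq (abs_of_nonneg h)))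
  · exact Or.inl (hnear.mono fun x hx ↦ by linarith [neg_abs_le (f x), abs_of_nonpos h])

lemma abs_besselReduced_succ_le {ν : ℕ} {ξ x M : ℝ} (hξ : 0 < ξ) (hξx : ξ ≤ x)
    (hcrit : besselReduced (ν + 1) ξ = 0) (hM : ∀ z ∈ Icc ξ x, |besselReduced ν z| ≤ M) :
    |besselReduced (ν + 1) x| ≤ M * (x - ξ) / x := by
  have hx : 0 < x := hξ.trans_le hξx
  have hderiv : ∀ z ∈ Icc ξ x, ‖z ^ ν * besselReduced ν z‖ ≤ x ^ ν * M := fun z hz ↦ by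
    have hz₀ : 0 ≤ z := hξ.le.trans hz.1
    rw [Real.norm_eq_abs, abs_mul, abs_of_nonneg (pow_nonneg hz₀ ν)]
    gcongr
    exacts [hz.2, hM z hz]
  have h := (convex_Icc ξ x).norm_image_sub_le_of_norm_hasDerivWithin_le
    (fun z _ ↦ (hasDerivAt_pow_mul_besselReduced ν z).hasDerivWithinAt) hderiv
    (left_mem_Icc.2 hξx) (right_mem_Icc.2 hξx)
  rw [hcrit, mul_zero, sub_zero, Real.norm_eq_abs, Real.norm_eq_abs, abs_mul,
    abs_of_pos (pow_pos hx _), abs_of_nonneg (sub_nonneg.2 hξx), pow_succ, mul_assoc, mul_assoc,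
    mul_le_mul_iff_right₀ (pow_pos hx ν)] at h
  rwa [le_div_iff₀ hx, mul_comm]

-- With `ξ` a point where `|F_ν|` is maximal between the zeros, `F_ν'(ξ) = -F_{ν+1}(ξ) = 0`;
-- integrating `(y^{ν+1} F_{ν+1})' = y^ν F_ν` and then `F_ν' = -F_{ν+1}` over `[ξ, b]` bounds
-- `|F_ν(ξ)|` by `(b - a)² / a` times itself.
lemma le_sq_sub_of_besselReduced_eq_zero {ν : ℕ} {a b : ℝ} (ha : 0 < a) (hab : a < b)
    (hFa : besselReduced ν a = 0) (hFb : besselReduced ν b = 0)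
    (hne : ∃ x ∈ Icc a b, besselReduced ν x ≠ 0) : a ≤ (b - a) ^ 2 := by
  obtain ⟨ξ, ⟨haξ, hξb⟩, hFξ, hextr, hmax⟩ := exists_isLocalExtr_forall_abs_le hab
    (continuous_besselReduced ν).continuousOn hFa hFb hne
  set M := |besselReduced ν ξ|
  have hM : 0 < M := abs_pos.2 hFξ
  have : 0 ≤ b - a := sub_nonneg.2 hab.le
  have hcrit : besselReduced (ν + 1) ξ = 0 :=
    neg_eq_zero.1 (hextr.hasDerivAt_eq_zero (hasDerivAt_besselReduced ν ξ))
  have hderiv : ∀ x ∈ Icc ξ b, ‖-besselReduced (ν + 1) x‖ ≤ M * (b - a) / a := fun x hx ↦ by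
    rw [norm_neg, Real.norm_eq_abs]
    refine (abs_besselReduced_succ_le (ha.trans haξ) hx.1 hcrit fun z hz ↦
      hmax z ⟨haξ.le.trans hz.1, hz.2.trans hx.2⟩).trans ?_
    gcongr
    exacts [hx.2, haξ.le.trans hx.1]
  have hmean := (convex_Icc ξ b).norm_image_sub_le_of_norm_hasDerivWithin_le
    (fun x _ ↦ (hasDerivAt_besselReduced ν x).hasDerivWithinAt) hderiv
    (right_mem_Icc.2 hξb.le) (left_mem_Icc.2 hξb.le)
  rw [hFb, sub_zero, Real.norm_eq_abs, norm_sub_rev, Real.norm_of_nonneg (by linarith)] at hmean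
  have hself : M * a ≤ M * (b - a) ^ 2 := by
    rw [← le_div_iff₀ ha]
    calc M ≤ M * (b - a) / a * (b - ξ) := hmean
      _ ≤ M * (b - a) / a * (b - a) := by gcongr
      _ = M * (b - a) ^ 2 / a := by ring
  exact le_of_mul_le_mul_left hself hM

lemma two_mul_le_sq_sub_sq_of_besselJ_eq_zero {ν : ℕ} {u v : ℝ} (hu : 0 < u) (huv : u < v)
    (hJu : besselJ ν u = 0) (hJv : besselJ ν v = 0) (hne : ∀ x ∈ Ioo u v, besselJ ν x ≠ 0) :
    2 * u ≤ v ^ 2 - u ^ 2 := by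
  have hv : 0 < v := hu.trans huv
  have hsq : u ^ 2 < v ^ 2 := by gcongr
  have hmid : ∃ y ∈ Icc (u ^ 2 / 4) (v ^ 2 / 4), besselReduced ν y ≠ 0 := by
    obtain ⟨x, hux, hxv⟩ := exists_between huv
    have hx : 0 < x := hu.trans hux
    refine ⟨x ^ 2 / 4, ⟨by gcongr, by gcongr⟩, ?_⟩
    exact (besselJ_eq_zero_iff hx ν).not.1 (hne x ⟨hux, hxv⟩)
  have hgap := le_sq_sub_of_besselReduced_eq_zero (by positivity) (by linarith)
    ((besselJ_eq_zero_iff hu ν).1 hJu) ((besselJ_eq_zero_iff hv ν).1 hJv) hmid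
  exact le_of_sq_le_sq (by linarith) (by linarith)

lemma tendsto_atTop_of_eventually_le_sub {u : ℕ → ℝ} {ε : ℝ} (hε : 0 < ε)
    (h : ∀ᶠ n in atTop, ε ≤ u (n + 1) - u n) : Tendsto u atTop atTop := by
  obtain ⟨N, hN⟩ := eventually_atTop.1 h
  rw [← tendsto_add_atTop_iff_nat N]
  refine tendsto_atTop_mono (fun n ↦ ?_) (tendsto_atTop_add_const_left atTop (u N)
    (tendsto_natCast_atTop_atTop.atTop_mul_const hε))
  induction n with
  | zero => simp
  | succ n ih =>
    have := hN (n + N) (by lia)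
    rw [add_right_comm n 1 N]
    push_cast
    linarith

/-- `j 1 < j 2 < ⋯` lists the positive zeros of `J_ν`. The value `j 0` is irrelevant. -/
structure IsBesselZeroSeq (ν : ℕ) (j : ℕ → ℝ) : Prop where
  pos : ∀ k, 1 ≤ k → 0 < j k
  lt : ∀ k l, 1 ≤ k → k < l → j k < j l
  eq_zero : ∀ k, 1 ≤ k → besselJ ν (j k) = 0
  surj : ∀ x : ℝ, 0 < x → besselJ ν x = 0 → ∃ k, 1 ≤ k ∧ j k = x

namespace IsBesselZeroSeq

variable {ν : ℕ} {j : ℕ → ℝ}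

lemma le (hj : IsBesselZeroSeq ν j) {k l : ℕ} (hk : 1 ≤ k) (hkl : k ≤ l) : j k ≤ j l := by
  rcases hkl.eq_or_lt with rfl | h
  exacts [le_rfl, (hj.lt k l hk h).le]

lemma sq_lt_sq (hj : IsBesselZeroSeq ν j) {k l : ℕ} (hk : 1 ≤ k) (hkl : k < l) :
    j k ^ 2 < j l ^ 2 :=
  pow_lt_pow_left₀ (hj.lt k l hk hkl) (hj.pos k hk).le two_ne_zero

lemma ne_zero_of_mem_Ioo (hj : IsBesselZeroSeq ν j) {n : ℕ} (hn : 1 ≤ n) {x : ℝ}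
    (hx : x ∈ Ioo (j n) (j (n + 1))) : besselJ ν x ≠ 0 := fun h ↦ by
  obtain ⟨k, hk, rfl⟩ := hj.surj x ((hj.pos n hn).trans hx.1) h
  rcases le_or_gt k n with hkn | hkn
  · exact (hj.le hk hkn).not_gt hx.1
  · exact (hj.le (by lia) hkn).not_gt hx.2

lemma two_mul_le_sq_sub_sq (hj : IsBesselZeroSeq ν j) {n : ℕ} (hn : 1 ≤ n) :
    2 * j n ≤ j (n + 1) ^ 2 - j n ^ 2 :=
  two_mul_le_sq_sub_sq_of_besselJ_eq_zero (hj.pos n hn) (hj.lt n (n + 1) hn n.lt_succ_self)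
    (hj.eq_zero n hn) (hj.eq_zero (n + 1) (by lia)) fun _ ↦ hj.ne_zero_of_mem_Ioo hn

lemma tendsto_sq_sub_sq (hj : IsBesselZeroSeq ν j) :
    Tendsto (fun n ↦ j (n + 1) ^ 2 - j n ^ 2) atTop atTop := by
  have hpos₁ : 0 < j 1 := hj.pos 1 le_rfl
  have hsq : Tendsto (fun n ↦ j n ^ 2) atTop atTop := by
    refine tendsto_atTop_of_eventually_le_sub hpos₁ ?_
    filter_upwards [eventually_ge_atTop 1] with n hn
    linarith [hj.two_mul_le_sq_sub_sq hn, hj.le le_rfl hn]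
  refine tendsto_atTop_mono' atTop ?_ (Real.tendsto_sqrt_atTop.comp hsq)
  filter_upwards [eventually_ge_atTop 1] with n hn
  rw [Function.comp_apply, Real.sqrt_sq (hj.pos n hn).le]
  linarith [hj.two_mul_le_sq_sub_sq hn, hj.pos n hn]

end IsBesselZeroSeq

end Bessel

section ExponentialSums

open scoped ComplexConjugate

/-- The exponential `t ↦ e^{ixt}` of frequency `x`. -/
noncomputable def wave (x t : ℝ) : ℂ := exp (I * x * t)

@[fun_prop]
lemma continuous_wave (x : ℝ) : Continuous (wave x) := by
  unfold wave
  fun_prop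

lemma wave_add_right (x t h : ℝ) : wave x (t + h) = wave x t * wave x h := by
  rw [wave, wave, wave, ← exp_add]
  push_cast
  ring_nf

lemma wave_add_left (x y t : ℝ) : wave (x + y) t = wave x t * wave y t := by
  rw [wave, wave, wave, ← exp_add]
  push_cast
  ring_nf

lemma wave_zero_right (x : ℝ) : wave x 0 = 1 := by simp [wave]

lemma wave_eq_exp_ofReal_mul_I (x t : ℝ) : wave x t = exp ((x * t : ℝ) * I) := by
  rw [wave]
  push_cast
  ring_nf

lemma norm_wave (x t : ℝ) : ‖wave x t‖ = 1 := by
  rw [wave_eq_exp_ofReal_mul_I, norm_exp_ofReal_mul_I]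

lemma wave_mul_conj_wave (x y t : ℝ) : wave x t * conj (wave y t) = wave (x - y) t := by
  have hconj : conj (wave y t) = wave (-y) t := by
    rw [wave, wave, ← exp_conj]
    simp
  rw [hconj, ← wave_add_left, sub_eq_add_neg]

lemma hasDerivAt_wave (x t : ℝ) : HasDerivAt (wave x) (I * x * wave x t) t := by
  refine ((hasDerivAt_id t).ofReal_comp.const_mul (I * (x : ℂ))).cexp.congr_deriv ?_
  simp only [id, ofReal_one, mul_one, wave]
  ring

lemma norm_wave_sub_wave_sq (x y t : ℝ) :
    ‖wave x t - wave y t‖ ^ 2 = 2 - 2 * Real.cos ((x - y) * t) := by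
  have hfactor : wave x t - wave y t = wave y t * (wave (x - y) t - 1) := by
    rw [mul_sub, ← wave_add_left, add_sub_cancel, mul_one]
  rw [hfactor, norm_mul, norm_wave, one_mul, wave_eq_exp_ofReal_mul_I, ← normSq_eq_norm_sq,
    normSq_apply]
  simp only [sub_re, sub_im, exp_ofReal_mul_I_re, exp_ofReal_mul_I_im, one_re, one_im]
  linarith [Real.sin_sq_add_cos_sq ((x - y) * t)]

/-- The exponential sum with frequencies in `s` and coefficients `c`. Summing over frequencies,
rather than over indices of a sequence of frequencies, makes them distinct automatically. -/
noncomputable def expSum (s : Finset ℝ) (c : ℝ → ℂ) (t : ℝ) : ℂ := ∑ x ∈ s, c x * wave x t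

@[fun_prop]
lemma continuous_expSum (s : Finset ℝ) (c : ℝ → ℂ) : Continuous (expSum s c) := by
  unfold expSum
  fun_prop

lemma expSum_add (s : Finset ℝ) (c : ℝ → ℂ) (t h : ℝ) :
    expSum s c (t + h) = expSum s (fun x ↦ c x * wave x h) t := by
  refine Finset.sum_congr rfl fun x _ ↦ ?_
  rw [wave_add_right]
  ring

lemma expSum_add_sub_wave_mul (s : Finset ℝ) (c : ℝ → ℂ) (y t h : ℝ) :
    expSum s c (t + h) - wave y h * expSum s c t =
      expSum s (fun x ↦ c x * (wave x h - wave y h)) t := by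
  rw [expSum_add, expSum, expSum, expSum, Finset.mul_sum, ← Finset.sum_sub_distrib]
  exact Finset.sum_congr rfl fun x _ ↦ by ring

lemma integral_norm_expSum_sq_translate (s : Finset ℝ) (c : ℝ → ℂ) (a b h : ℝ) :
    ∫ t in (a + h)..(b + h), ‖expSum s c t‖ ^ 2 =
      ∫ t in a..b, ‖expSum s (fun x ↦ c x * wave x h) t‖ ^ 2 := by
  simp_rw [← expSum_add]
  exact (intervalIntegral.integral_comp_add_right (fun t ↦ ‖expSum s c t‖ ^ 2) h).symm

lemma norm_expSum_image_sub (s : Finset ℝ) (c : ℝ → ℂ) (a t : ℝ) :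
    ‖expSum (s.image (· - a)) (fun x ↦ c (x + a)) t‖ = ‖expSum s c t‖ := by
  have hmod : expSum s c t = wave a t * expSum (s.image (· - a)) (fun x ↦ c (x + a)) t := by
    rw [expSum, expSum, Finset.sum_image (sub_left_injective.injOn), Finset.mul_sum]
    refine Finset.sum_congr rfl fun x _ ↦ ?_
    rw [sub_add_cancel, mul_left_comm, ← wave_add_left, add_sub_cancel]
  rw [hmod, norm_mul, norm_wave, one_mul]

/-- The Riesz lower bound on `(0, T)` for the exponentials with frequencies in `S`. -/
def HasRieszLowerBound (S : Set ℝ) (T : ℝ) : Prop :=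
  ∃ m > 0, ∀ s : Finset ℝ, ↑s ⊆ S → ∀ c : ℝ → ℂ,
    m * ∑ x ∈ s, ‖c x‖ ^ 2 ≤ ∫ t in (0 : ℝ)..T, ‖expSum s c t‖ ^ 2

/-- The Riesz upper bound (Bessel inequality) on `(0, T)` for the exponentials with frequencies
in `S`. -/
def HasRieszUpperBound (S : Set ℝ) (T : ℝ) : Prop :=
  ∃ M > 0, ∀ s : Finset ℝ, ↑s ⊆ S → ∀ c : ℝ → ℂ,
    ∫ t in (0 : ℝ)..T, ‖expSum s c t‖ ^ 2 ≤ M * ∑ x ∈ s, ‖c x‖ ^ 2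

lemma HasRieszLowerBound.mono_set {S S' : Set ℝ} {T : ℝ} (h : HasRieszLowerBound S' T)
    (hS : S ⊆ S') : HasRieszLowerBound S T := by
  obtain ⟨m, hm, hlow⟩ := h
  exact ⟨m, hm, fun s hs ↦ hlow s (hs.trans hS)⟩

lemma integral_norm_sq_mono_interval {f : ℝ → ℂ} (hf : Continuous f) {a b a' b' : ℝ}
    (ha : a' ≤ a) (hab : a ≤ b) (hb : b ≤ b') :
    ∫ t in a..b, ‖f t‖ ^ 2 ≤ ∫ t in a'..b', ‖f t‖ ^ 2 :=
  intervalIntegral.integral_mono_interval ha hab hb (.of_forall fun _ ↦ sq_nonneg _)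
    ((hf.norm.pow 2).intervalIntegrable _ _)

lemma HasRieszLowerBound.mono_time {S : Set ℝ} {T' T : ℝ} (h : HasRieszLowerBound S T')
    (hT' : 0 ≤ T') (hT : T' ≤ T) : HasRieszLowerBound S T := by
  obtain ⟨m, hm, hlow⟩ := h
  exact ⟨m, hm, fun s hs c ↦ (hlow s hs c).trans
    (integral_norm_sq_mono_interval (continuous_expSum s c) le_rfl hT' hT)⟩

lemma exists_expSum_eq_tsum {ι : Type*} {S : Set ℝ} {freq : ι → ℝ} {c : ι → ℂ}
    (hc : (Function.support c).Finite) (hinj : Set.InjOn freq (Function.support c))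
    (hmem : Set.MapsTo freq (Function.support c) S) :
    ∃ s : Finset ℝ, ↑s ⊆ S ∧ ∃ d : ℝ → ℂ, ∑' k, ‖c k‖ ^ 2 = ∑ x ∈ s, ‖d x‖ ^ 2 ∧
      ∀ t : ℝ, ∑' k, c k * exp (I * (freq k : ℂ) * (t : ℂ)) = expSum s d t := by
  classical
  have hzero : ∀ k ∉ hc.toFinset, c k = 0 := fun k hk ↦ by simpa using hk
  have hinj' : Set.InjOn freq hc.toFinset := by rwa [hc.coe_toFinset]
  rcases isEmpty_or_nonempty ι with _ | _
  · exact ⟨∅, by simp, 0, by simp, fun t ↦ by simp [expSum]⟩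
  have hinv : ∀ k ∈ hc.toFinset,
      c (Function.invFunOn freq (Function.support c) (freq k)) = c k := fun k hk ↦ by
    rw [hinj.leftInvOn_invFunOn (hc.mem_toFinset.1 hk)]
  refine ⟨hc.toFinset.image freq, ?_,
    fun x ↦ c (Function.invFunOn freq (Function.support c) x), ?_, fun t ↦ ?_⟩
  · rw [Finset.coe_image, hc.coe_toFinset]
    exact hmem.image_subset
  · rw [tsum_eq_sum fun k hk ↦ by simp [hzero k hk], Finset.sum_image hinj']
    exact Finset.sum_congr rfl fun k hk ↦ by beta_reduce; rw [hinv k hk]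
  · rw [tsum_eq_sum fun k hk ↦ by simp [hzero k hk], expSum, Finset.sum_image hinj']
    exact Finset.sum_congr rfl fun k hk ↦ by rw [hinv k hk, wave]

end ExponentialSums

section SeparatedFrequencies

open scoped ComplexConjugate

/-- Distinct points of `S` are at distance at least `δ`. In contrast to `Metric.IsSeparated` the
bound is a real number and the inequality is not strict. -/
def SeparatedBy (δ : ℝ) (S : Set ℝ) : Prop := S.Pairwise fun x y ↦ δ ≤ |x - y|

lemma SeparatedBy.exists_insert {δ : ℝ} {S : Set ℝ} (hS : SeparatedBy δ S) (hδ : 0 < δ) (μ : ℝ) :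
    ∃ δ' > 0, SeparatedBy δ' (insert μ S) := by
  suffices h : ∃ δ' > 0, δ' ≤ δ ∧ ∀ x ∈ S, μ ≠ x → δ' ≤ |μ - x| by
    obtain ⟨δ', hδ', hle, hμ⟩ := h
    exact ⟨δ', hδ', (hS.imp fun x y hxy ↦ hle.trans hxy).insert fun x hx hne ↦
      ⟨hμ x hx hne, abs_sub_comm μ x ▸ hμ x hx hne⟩⟩
  by_cases hnear : ∃ y ∈ S, μ ≠ y ∧ |μ - y| < δ / 2
  · obtain ⟨y, hy, hμy, hlt⟩ := hnear
    refine ⟨|μ - y|, abs_pos.2 (sub_ne_zero.2 hμy), by linarith, fun x hx _ ↦ ?_⟩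
    rcases eq_or_ne x y with rfl | hxy
    · exact le_rfl
    · have htri := abs_sub_le x μ y
      rw [abs_sub_comm x μ] at htri
      linarith [hS hx hy hxy]
  · push Not at hnear
    exact ⟨δ / 2, by linarith, by linarith, hnear⟩

lemma SeparatedBy.exists_union {δ : ℝ} {S : Set ℝ} (hS : SeparatedBy δ S) (hδ : 0 < δ)
    {F : Set ℝ} (hF : F.Finite) : ∃ δ' > 0, SeparatedBy δ' (S ∪ F) := by
  induction F, hF using Set.Finite.induction_on with
  | empty => exact ⟨δ, hδ, by rwa [Set.union_empty]⟩
  | insert _ _ ih =>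
    obtain ⟨δ', hδ', hsep⟩ := ih
    rw [Set.union_insert]
    exact hsep.exists_insert hδ' _

lemma exists_separatedBy_of_finite {F : Set ℝ} (hF : F.Finite) : ∃ δ > 0, SeparatedBy δ F := by
  simpa using SeparatedBy.exists_union (Set.pairwise_empty _) one_pos hF

lemma summable_inv_one_add_int_sq : Summable fun k : ℤ ↦ (1 + (k : ℝ) ^ 2)⁻¹ := by
  have hdom : Summable fun k : ℤ ↦ 1 / (k : ℝ) ^ 2 :=
    Real.summable_one_div_int_pow.2 one_lt_two
  refine hdom.of_norm_bounded_eventually ((Set.finite_singleton 0).subset fun k hk ↦ ?_)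
  by_contra hk₀
  have hpos : 0 < (k : ℝ) ^ 2 := by
    have : (k : ℝ) ≠ 0 := Int.cast_ne_zero.2 hk₀
    positivity
  refine hk ?_
  change ‖(1 + (k : ℝ) ^ 2)⁻¹‖ ≤ 1 / (k : ℝ) ^ 2
  rw [norm_inv, Real.norm_of_nonneg (by positivity), one_div]
  gcongr
  linarith

lemma inv_one_add_sq_le_floor {δ : ℝ} (hδ : 0 < δ) (z : ℝ) :
    (1 + z ^ 2)⁻¹ ≤ (3 + 2 / δ ^ 2) * (1 + (⌊z / δ⌋ : ℝ) ^ 2)⁻¹ := by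
  have hle := Int.floor_le (z / δ)
  have hlt := Int.lt_floor_add_one (z / δ)
  set k : ℝ := (⌊z / δ⌋ : ℝ)
  obtain ⟨w, rfl⟩ : ∃ w, z = w * δ := ⟨z / δ, by field⟩
  rw [mul_div_cancel_right₀ w hδ.ne'] at hle hlt
  rw [← div_eq_mul_inv, inv_eq_one_div, div_le_div_iff₀ (by positivity) (by positivity)]
  have hexpand : (3 + 2 / δ ^ 2) * (1 + (w * δ) ^ 2) =
      3 + 2 / δ ^ 2 + 3 * (w * δ) ^ 2 + 2 * w ^ 2 := by field
  have : 0 ≤ 2 / δ ^ 2 := by positivity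
  nlinarith [sq_nonneg (w * δ), sq_nonneg (k - 2 * w), sq_nonneg (k - w)]

-- The floors `⌊(x - y) / δ⌋` are distinct for distinct `y ∈ s`.
lemma SeparatedBy.sum_inv_one_add_sq_le {δ : ℝ} {s : Finset ℝ} (hs : SeparatedBy δ s) (hδ : 0 < δ)
    (x : ℝ) : ∑ y ∈ s, (1 + (x - y) ^ 2)⁻¹ ≤
      (3 + 2 / δ ^ 2) * ∑ k ∈ s.image fun y ↦ ⌊(x - y) / δ⌋, (1 + (k : ℝ) ^ 2)⁻¹ := by
  rw [Finset.sum_image, Finset.mul_sum]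
  · exact Finset.sum_le_sum fun y _ ↦ inv_one_add_sq_le_floor hδ (x - y)
  · intro y hy z hz hfloor
    by_contra hne
    have hclose := Int.abs_sub_lt_one_of_floor_eq_floor hfloor
    rw [← sub_div, abs_div, abs_of_pos hδ, div_lt_one hδ, sub_sub_sub_cancel_left] at hclose
    exact (hs hz hy (Ne.symm hne)).not_gt hclose

lemma exists_forall_sum_inv_one_add_sq_le {δ : ℝ} (hδ : 0 < δ) :
    ∃ B > 0, ∀ s : Finset ℝ, SeparatedBy δ s → ∀ x : ℝ, ∑ y ∈ s, (1 + (x - y) ^ 2)⁻¹ ≤ B := by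
  have hpos : 0 < ∑' k : ℤ, (1 + (k : ℝ) ^ 2)⁻¹ :=
    summable_inv_one_add_int_sq.tsum_pos (fun k ↦ by positivity) 0 (by positivity)
  refine ⟨(3 + 2 / δ ^ 2) * ∑' k : ℤ, (1 + (k : ℝ) ^ 2)⁻¹, by positivity, fun s hs x ↦ ?_⟩
  refine (hs.sum_inv_one_add_sq_le hδ x).trans ?_
  gcongr
  exact summable_inv_one_add_int_sq.sum_le_tsum _ fun k _ ↦ by positivity

lemma exists_forall_far_sum_inv_one_add_sq_le {δ ε : ℝ} (hδ : 0 < δ) (hε : 0 < ε) :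
    ∃ D > 0, ∀ s : Finset ℝ, SeparatedBy δ s → ∀ x : ℝ, (∀ y ∈ s, D ≤ |x - y|) →
      ∑ y ∈ s, (1 + (x - y) ^ 2)⁻¹ ≤ ε := by
  set C := 3 + 2 / δ ^ 2
  have : 0 < C := by positivity
  obtain ⟨K, hK⟩ := summable_iff_vanishing_norm.1 summable_inv_one_add_int_sq (ε / C)
    (by positivity)
  set R : ℝ := ∑ k ∈ K, |(k : ℝ)|
  have : 0 ≤ R := Finset.sum_nonneg fun _ _ ↦ abs_nonneg _
  refine ⟨δ * (R + 2), by positivity, fun s hs x hfar ↦ ?_⟩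
  have hdisj : Disjoint (s.image fun y ↦ ⌊(x - y) / δ⌋) K := by
    rw [Finset.disjoint_left]
    intro k hk hkK
    obtain ⟨y, hy, rfl⟩ := Finset.mem_image.1 hk
    have hfloor : |((⌊(x - y) / δ⌋ : ℤ) : ℝ)| ≤ R :=
      Finset.single_le_sum (f := fun k : ℤ ↦ |(k : ℝ)|) (fun _ _ ↦ abs_nonneg _) hkK
    have hquot : R + 2 ≤ |(x - y) / δ| := by
      rw [abs_div, abs_of_pos hδ, le_div_iff₀' hδ]
      exact hfar y hy
    have hle := Int.floor_le ((x - y) / δ)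
    have hlt := Int.lt_floor_add_one ((x - y) / δ)
    rw [abs_le] at hfloor
    rcases le_abs.1 hquot with h | h <;> linarith [hfloor.1, hfloor.2]
  calc ∑ y ∈ s, (1 + (x - y) ^ 2)⁻¹
      ≤ C * ∑ k ∈ s.image fun y ↦ ⌊(x - y) / δ⌋, (1 + (k : ℝ) ^ 2)⁻¹ :=
        hs.sum_inv_one_add_sq_le hδ x
    _ ≤ C * (ε / C) := by
        gcongr
        exact (le_abs_self _).trans (hK _ hdisj).le
    _ = ε := by field

/-- The Fourier transform of the weight `t (T - t)` on `(0, T)`. Since the weight vanishes at both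
ends, it decays quadratically, fast enough for the Schur test. -/
noncomputable def quadKernel (T x : ℝ) : ℂ :=
  ∫ t in (0 : ℝ)..T, ((t * (T - t) : ℝ) : ℂ) * wave x t

lemma norm_quadKernel_le_cube {T : ℝ} (hT : 0 ≤ T) (x : ℝ) : ‖quadKernel T x‖ ≤ T ^ 3 := by
  have hweight : ∀ t ∈ Set.uIoc 0 T, ‖((t * (T - t) : ℝ) : ℂ) * wave x t‖ ≤ T ^ 2 := by
    intro t ht
    rw [Set.uIoc_of_le hT] at ht
    rw [norm_mul, norm_wave, mul_one, norm_real,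
      Real.norm_of_nonneg (mul_nonneg ht.1.le (sub_nonneg.2 ht.2))]
    nlinarith [ht.1, ht.2]
  calc ‖quadKernel T x‖ ≤ T ^ 2 * |T - 0| :=
        intervalIntegral.norm_integral_le_of_norm_le_const hweight
    _ = T ^ 3 := by rw [sub_zero, abs_of_nonneg hT]; ring

-- Two integrations by parts, packaged as an explicit antiderivative.
lemma sq_mul_quadKernel (T x : ℝ) :
    (x : ℂ) ^ 2 * quadKernel T x =
      (∫ t in (0 : ℝ)..T, 2 * wave x t) - (T * wave x T + T * wave x 0) := by
  have hderiv : ∀ t ∈ Set.uIcc 0 T, HasDerivAt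
      (fun t : ℝ ↦ ((t * (T - t) : ℝ) : ℂ) * (-I * x) * wave x t + ((T - 2 * t : ℝ) : ℂ) * wave x t)
      ((x : ℂ) ^ 2 * (((t * (T - t) : ℝ) : ℂ) * wave x t) - 2 * wave x t) t := by
    intro t _
    have hweight : HasDerivAt (fun t : ℝ ↦ t * (T - t)) (T - 2 * t) t :=
      ((hasDerivAt_id t).mul ((hasDerivAt_id t).const_sub T)).congr_deriv (by simp only [id]; ring)
    have hweight' : HasDerivAt (fun t : ℝ ↦ T - 2 * t) (-2) t :=
      (((hasDerivAt_id t).const_mul 2).const_sub T).congr_deriv (by norm_num)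
    refine (((hweight.ofReal_comp.mul_const (-I * x)).mul (hasDerivAt_wave x t)).add
      (hweight'.ofReal_comp.mul (hasDerivAt_wave x t))).congr_deriv ?_
    push_cast
    linear_combination (-(x : ℂ) ^ 2 * (t * (T - t)) * wave x t) * I_sq
  have hint : IntervalIntegrable
      (fun t : ℝ ↦ (x : ℂ) ^ 2 * (((t * (T - t) : ℝ) : ℂ) * wave x t)) volume 0 T :=
    Continuous.intervalIntegrable (by fun_prop) _ _
  have hint' : IntervalIntegrable (fun t : ℝ ↦ 2 * wave x t) volume 0 T :=
    Continuous.intervalIntegrable (by fun_prop) _ _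
  have hftc := intervalIntegral.integral_eq_sub_of_hasDerivAt hderiv (hint.sub hint')
  rw [intervalIntegral.integral_sub hint hint', intervalIntegral.integral_const_mul,
    sub_eq_iff_eq_add] at hftc
  rw [quadKernel, hftc]
  push_cast
  ring

lemma norm_sq_mul_quadKernel_le {T : ℝ} (hT : 0 ≤ T) (x : ℝ) :
    ‖(x : ℂ) ^ 2 * quadKernel T x‖ ≤ 4 * T := by
  have hnorm : ∀ t, ‖(T : ℂ) * wave x t‖ = T := fun t ↦ by
    rw [norm_mul, norm_wave, mul_one, norm_real, Real.norm_of_nonneg hT]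
  have hint : ‖∫ t in (0 : ℝ)..T, 2 * wave x t‖ ≤ 2 * |T - 0| :=
    intervalIntegral.norm_integral_le_of_norm_le_const fun t _ ↦ by simp [norm_wave]
  rw [sub_zero, abs_of_nonneg hT] at hint
  have hboundary : ‖(T : ℂ) * wave x T + T * wave x 0‖ ≤ T + T :=
    (norm_add_le _ _).trans_eq (by rw [hnorm, hnorm])
  rw [sq_mul_quadKernel]
  linarith [norm_sub_le (∫ t in (0 : ℝ)..T, 2 * wave x t) (T * wave x T + T * wave x 0)]

lemma norm_quadKernel_le {T : ℝ} (hT : 0 ≤ T) (x : ℝ) :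
    ‖quadKernel T x‖ ≤ (T ^ 3 + 4 * T) * (1 + x ^ 2)⁻¹ := by
  have hlarge := norm_sq_mul_quadKernel_le hT x
  rw [norm_mul, norm_pow, norm_real, Real.norm_eq_abs, sq_abs] at hlarge
  rw [← div_eq_mul_inv, le_div_iff₀ (by positivity)]
  linarith [norm_quadKernel_le_cube hT x]

/-- The energy on `(0, T)` of an exponential sum, weighted by `t (T - t)`. -/
noncomputable def weightedEnergy (T : ℝ) (s : Finset ℝ) (c : ℝ → ℂ) : ℝ :=
  ∫ t in (0 : ℝ)..T, t * (T - t) * ‖expSum s c t‖ ^ 2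

lemma weightedEnergy_eq_sum (T : ℝ) (s : Finset ℝ) (c : ℝ → ℂ) :
    weightedEnergy T s c = ∑ x ∈ s, ∑ y ∈ s, (c x * conj (c y) * quadKernel T (x - y)).re := by
  have hexpand : ∀ t : ℝ, ((t * (T - t) * ‖expSum s c t‖ ^ 2 : ℝ) : ℂ) =
      ∑ x ∈ s, ∑ y ∈ s,
        c x * conj (c y) * (((t * (T - t) : ℝ) : ℂ) * wave (x - y) t) := by
    intro t
    rw [ofReal_mul, ofReal_pow, ← mul_conj', expSum, map_sum, Finset.sum_mul_sum, Finset.mul_sum]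
    refine Finset.sum_congr rfl fun x _ ↦ ?_
    rw [Finset.mul_sum]
    refine Finset.sum_congr rfl fun y _ ↦ ?_
    rw [map_mul, ← wave_mul_conj_wave]
    ring
  have hcomplex : (weightedEnergy T s c : ℂ) =
      ∑ x ∈ s, ∑ y ∈ s, c x * conj (c y) * quadKernel T (x - y) := by
    rw [weightedEnergy, ← intervalIntegral.integral_ofReal]
    simp_rw [hexpand]
    rw [intervalIntegral.integral_finsetSum fun x _ ↦
      Continuous.intervalIntegrable (by fun_prop) _ _]
    refine Finset.sum_congr rfl fun x _ ↦ ?_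
    rw [intervalIntegral.integral_finsetSum fun y _ ↦
      Continuous.intervalIntegrable (by fun_prop) _ _]
    exact Finset.sum_congr rfl fun y _ ↦ intervalIntegral.integral_const_mul _ _
  rw [← ofReal_re (weightedEnergy T s c), hcomplex]
  simp only [re_sum]

lemma abs_re_mul_quadKernel_le {T : ℝ} (hT : 0 ≤ T) (c : ℝ → ℂ) (x y : ℝ) :
    |(c x * conj (c y) * quadKernel T (x - y)).re| ≤
      (T ^ 3 + 4 * T) * (‖c x‖ * ‖c y‖ * (1 + (x - y) ^ 2)⁻¹) := by
  refine (abs_re_le_norm _).trans ?_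
  rw [norm_mul, norm_mul, norm_conj, mul_left_comm]
  gcongr
  exact norm_quadKernel_le hT _

lemma mul_integral_le_weightedEnergy {a T : ℝ} (ha : 0 ≤ a) (haT : a ≤ T - a) (s : Finset ℝ)
    (c : ℝ → ℂ) :
    a * (T - a) * ∫ t in a..(T - a), ‖expSum s c t‖ ^ 2 ≤ weightedEnergy T s c := by
  calc a * (T - a) * ∫ t in a..(T - a), ‖expSum s c t‖ ^ 2
      = ∫ t in a..(T - a), a * (T - a) * ‖expSum s c t‖ ^ 2 :=
        (intervalIntegral.integral_const_mul _ _).symm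
    _ ≤ ∫ t in a..(T - a), t * (T - t) * ‖expSum s c t‖ ^ 2 := by
        refine intervalIntegral.integral_mono_on haT
          (Continuous.intervalIntegrable (by fun_prop) _ _)
          (Continuous.intervalIntegrable (by fun_prop) _ _) fun t ht ↦ ?_
        gcongr ?_ * _
        nlinarith [mul_nonneg (sub_nonneg.2 ht.1) (sub_nonneg.2 ht.2)]
    _ ≤ weightedEnergy T s c := by
        refine intervalIntegral.integral_mono_interval ha haT (by linarith)
          (ae_restrict_of_forall_mem measurableSet_Ioc fun t ht ↦ ?_)
          (Continuous.intervalIntegrable (by fun_prop) _ _)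
        exact mul_nonneg (mul_nonneg ht.1.le (sub_nonneg.2 ht.2)) (sq_nonneg _)

lemma weightedEnergy_le {T : ℝ} (hT : 0 ≤ T) (s : Finset ℝ) (c : ℝ → ℂ) :
    weightedEnergy T s c ≤ T ^ 2 * ∫ t in (0 : ℝ)..T, ‖expSum s c t‖ ^ 2 := by
  rw [weightedEnergy, ← intervalIntegral.integral_const_mul]
  refine intervalIntegral.integral_mono_on hT (Continuous.intervalIntegrable (by fun_prop) _ _)
    (Continuous.intervalIntegrable (by fun_prop) _ _) fun t ht ↦ ?_
  gcongr ?_ * _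
  nlinarith [ht.1, ht.2]

lemma sum_mul_mul_le_of_row_sum_le {α : Type*} {s : Finset α} {K : α → α → ℝ} {B : ℝ}
    (hK : ∀ x ∈ s, ∀ y ∈ s, 0 ≤ K x y) (hsymm : ∀ x ∈ s, ∀ y ∈ s, K x y = K y x)
    (hrow : ∀ x ∈ s, ∑ y ∈ s, K x y ≤ B) (a : α → ℝ) :
    ∑ x ∈ s, ∑ y ∈ s, a x * a y * K x y ≤ B * ∑ x ∈ s, a x ^ 2 := by
  have hswap : ∑ x ∈ s, ∑ y ∈ s, a y ^ 2 * K x y = ∑ x ∈ s, ∑ y ∈ s, a x ^ 2 * K x y := by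
    rw [Finset.sum_comm]
    exact Finset.sum_congr rfl fun x hx ↦ Finset.sum_congr rfl fun y hy ↦ by rw [hsymm y hy x hx]
  have hrows : ∑ x ∈ s, ∑ y ∈ s, a x ^ 2 * K x y ≤ B * ∑ x ∈ s, a x ^ 2 := by
    rw [Finset.mul_sum]
    refine Finset.sum_le_sum fun x hx ↦ ?_
    rw [← Finset.mul_sum, mul_comm B]
    gcongr
    exact hrow x hx
  calc ∑ x ∈ s, ∑ y ∈ s, a x * a y * K x y
      ≤ ∑ x ∈ s, ∑ y ∈ s, (a x ^ 2 * K x y + a y ^ 2 * K x y) / 2 :=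
        Finset.sum_le_sum fun x hx ↦ Finset.sum_le_sum fun y hy ↦ by
          nlinarith [mul_nonneg (sq_nonneg (a x - a y)) (hK x hx y hy)]
    _ = ∑ x ∈ s, ∑ y ∈ s, a x ^ 2 * K x y := by
        simp_rw [← Finset.sum_div, Finset.sum_add_distrib]
        linarith
    _ ≤ B * ∑ x ∈ s, a x ^ 2 := hrows

-- A translate of `(0, T)` is the middle third of `(0, 3T)`, where the weight is at least `2T²`.
lemma SeparatedBy.hasRieszUpperBound {δ T : ℝ} {S : Set ℝ} (hS : SeparatedBy δ S) (hδ : 0 < δ)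
    (hT : 0 < T) : HasRieszUpperBound S T := by
  obtain ⟨B, hB, hrow⟩ := exists_forall_sum_inv_one_add_sq_le hδ
  set C := (3 * T) ^ 3 + 4 * (3 * T)
  have hweighted : ∀ s : Finset ℝ, ↑s ⊆ S → ∀ c : ℝ → ℂ,
      weightedEnergy (3 * T) s c ≤ C * (B * ∑ x ∈ s, ‖c x‖ ^ 2) := by
    intro s hs c
    have hschur := sum_mul_mul_le_of_row_sum_le (s := s) (K := fun x y ↦ (1 + (x - y) ^ 2)⁻¹)
      (fun x _ y _ ↦ by positivity) (fun x _ y _ ↦ by rw [sub_sq_comm])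
      (fun x _ ↦ hrow s (hS.mono hs) x) (fun x ↦ ‖c x‖)
    calc weightedEnergy (3 * T) s c
        ≤ ∑ x ∈ s, ∑ y ∈ s, C * (‖c x‖ * ‖c y‖ * (1 + (x - y) ^ 2)⁻¹) := by
          rw [weightedEnergy_eq_sum]
          exact Finset.sum_le_sum fun x _ ↦ Finset.sum_le_sum fun y _ ↦
            (le_abs_self _).trans (abs_re_mul_quadKernel_le (by positivity) c x y)
      _ ≤ C * (B * ∑ x ∈ s, ‖c x‖ ^ 2) := by
          simp_rw [← Finset.mul_sum]
          gcongr
  refine ⟨C * B / (2 * T ^ 2), by positivity, fun s hs c ↦ ?_⟩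
  have hshift := integral_norm_expSum_sq_translate s (fun x ↦ c x * wave x (-T)) 0 T T
  simp only [mul_assoc, ← wave_add_right, neg_add_cancel, wave_zero_right, mul_one, zero_add]
    at hshift
  have hmiddle := mul_integral_le_weightedEnergy (T := 3 * T) hT.le (by linarith) s
    fun x ↦ c x * wave x (-T)
  have hupper := hweighted s hs fun x ↦ c x * wave x (-T)
  simp only [norm_mul, norm_wave, mul_one] at hupper
  rw [show 3 * T - T = T + T by ring, hshift] at hmiddle
  rw [div_mul_eq_mul_div, le_div_iff₀ (by positivity)]
  linarith

end SeparatedFrequencies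

section AddingFrequencies

lemma exists_mul_le_sub_sin {u₀ : ℝ} (hu₀ : 0 < u₀) :
    ∃ κ > 0, ∀ u ≥ u₀, κ * u ≤ u - Real.sin u := by
  have hpos : 0 < u₀ - Real.sin u₀ := sub_pos.2 (Real.sin_lt hu₀)
  have hhalf := min_le_left (1 / 2) ((u₀ - Real.sin u₀) / 2)
  have hgap := min_le_right (1 / 2) ((u₀ - Real.sin u₀) / 2)
  refine ⟨min (1 / 2) ((u₀ - Real.sin u₀) / 2), by positivity, fun u hu ↦ ?_⟩
  rcases le_total u 2 with h | h
  · have hmono : Real.sin u - Real.sin u₀ ≤ u - u₀ :=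
      (le_abs_self _).trans ((Real.abs_sin_sub_sin_le u u₀).trans_eq
        (abs_of_nonneg (sub_nonneg.2 hu)))
    nlinarith
  · nlinarith [Real.sin_le_one u]

lemma integral_norm_wave_sub_wave_sq {x y : ℝ} (hxy : x ≠ y) (ε : ℝ) :
    ∫ h in (0 : ℝ)..ε, ‖wave x h - wave y h‖ ^ 2 =
      2 * (ε - Real.sin (|x - y| * ε) / |x - y|) := by
  have hne : |x - y| ≠ 0 := abs_ne_zero.2 (sub_ne_zero.2 hxy)
  have heven : ∀ h : ℝ, ‖wave x h - wave y h‖ ^ 2 = 2 * (1 - Real.cos (|x - y| * h)) := by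
    intro h
    rw [norm_wave_sub_wave_sq]
    rcases abs_choice (x - y) with habs | habs <;> rw [habs]
    · ring
    · rw [neg_mul, Real.cos_neg]
      ring
  simp_rw [heven]
  rw [intervalIntegral.integral_const_mul, intervalIntegral.integral_sub (by simp)
      (Continuous.intervalIntegrable (by fun_prop) _ _), intervalIntegral.integral_comp_mul_left
      Real.cos hne, integral_cos]
  simp [div_eq_inv_mul]

lemma exists_le_integral_norm_wave_sub_wave_sq {δ ε : ℝ} (hδ : 0 < δ) (hε : 0 < ε) :
    ∃ κ > 0, ∀ x y : ℝ, δ ≤ |x - y| → κ ≤ ∫ h in (0 : ℝ)..ε, ‖wave x h - wave y h‖ ^ 2 := by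
  obtain ⟨κ, hκ, hsin⟩ := exists_mul_le_sub_sin (mul_pos hδ hε)
  refine ⟨2 * (κ * ε), by positivity, fun x y hxy ↦ ?_⟩
  have hpos : 0 < |x - y| := hδ.trans_le hxy
  rw [integral_norm_wave_sub_wave_sq (sub_ne_zero.1 (abs_pos.1 hpos))]
  gcongr
  rw [le_sub_comm, div_le_iff₀ hpos]
  linarith [hsin (|x - y| * ε) (by gcongr)]

lemma integral_norm_sub_sq_le {f g : ℝ → ℂ} (hf : Continuous f) (hg : Continuous g) {a b : ℝ}
    (hab : a ≤ b) : ∫ t in a..b, ‖f t - g t‖ ^ 2 ≤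
      2 * ((∫ t in a..b, ‖f t‖ ^ 2) + ∫ t in a..b, ‖g t‖ ^ 2) := by
  rw [← intervalIntegral.integral_add (Continuous.intervalIntegrable (by fun_prop) _ _)
      (Continuous.intervalIntegrable (by fun_prop) _ _), ← intervalIntegral.integral_const_mul]
  refine intervalIntegral.integral_mono_on hab (Continuous.intervalIntegrable (by fun_prop) _ _)
    (Continuous.intervalIntegrable (by fun_prop) _ _) fun t _ ↦ ?_
  calc ‖f t - g t‖ ^ 2 ≤ (‖f t‖ + ‖g t‖) ^ 2 := by
        gcongr
        exact norm_sub_le _ _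
    _ ≤ 2 * (‖f t‖ ^ 2 + ‖g t‖ ^ 2) := add_sq_le

lemma integral_norm_shift_sub_mul_sq_le {f : ℝ → ℂ} (hf : Continuous f) {θ : ℂ} (hθ : ‖θ‖ = 1)
    {h T' T : ℝ} (hh : 0 ≤ h) (hT' : 0 ≤ T') (hT : T' + h ≤ T) :
    ∫ t in (0 : ℝ)..T', ‖f (t + h) - θ * f t‖ ^ 2 ≤ 4 * ∫ t in (0 : ℝ)..T, ‖f t‖ ^ 2 := by
  have hsub := integral_norm_sub_sq_le (f := fun t ↦ f (t + h)) (g := fun t ↦ θ * f t)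
    (by fun_prop) (by fun_prop) hT'
  simp only [norm_mul, hθ, one_mul] at hsub
  rw [intervalIntegral.integral_comp_add_right (fun t ↦ ‖f t‖ ^ 2)] at hsub
  have hshifted : ∫ t in (0 + h)..(T' + h), ‖f t‖ ^ 2 ≤ ∫ t in (0 : ℝ)..T, ‖f t‖ ^ 2 :=
    integral_norm_sq_mono_interval hf (by linarith) (by linarith) hT
  have hunshifted : ∫ t in (0 : ℝ)..T', ‖f t‖ ^ 2 ≤ ∫ t in (0 : ℝ)..T, ‖f t‖ ^ 2 :=
    integral_norm_sq_mono_interval hf le_rfl hT' (by linarith)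
  linarith

lemma integral_norm_expSum_erase_sq_le {T' T h : ℝ} (hh : 0 ≤ h) (hT' : 0 ≤ T')
    (hT : T' + h ≤ T) (s : Finset ℝ) (c : ℝ → ℂ) (μ : ℝ) :
    ∫ t in (0 : ℝ)..T', ‖expSum (s.erase μ) (fun x ↦ c x * (wave x h - wave μ h)) t‖ ^ 2 ≤
      4 * ∫ t in (0 : ℝ)..T, ‖expSum s c t‖ ^ 2 := by
  have hkill : ∀ t, expSum (s.erase μ) (fun x ↦ c x * (wave x h - wave μ h)) t =
      expSum s c (t + h) - wave μ h * expSum s c t := fun t ↦ by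
    rw [expSum_add_sub_wave_mul]
    exact Finset.sum_erase _ (by simp)
  simp_rw [hkill]
  exact integral_norm_shift_sub_mul_sq_le (continuous_expSum s c) (norm_wave μ h) hh hT' hT

-- The difference operator `f ↦ f(· + h) - e^{iμh} f` kills the frequency `μ` at the cost of a time
-- `h`; its multiplier at `x` may vanish for some `h`, but not on average over `h ∈ (0, T - T')`.
lemma HasRieszLowerBound.exists_sum_erase_le {S : Set ℝ} {T' T δ μ : ℝ}
    (hlow : HasRieszLowerBound S T') (hT' : 0 ≤ T') (hT : T' < T) (hδ : 0 < δ)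
    (hμ : ∀ x ∈ S, δ ≤ |x - μ|) :
    ∃ A > 0, ∀ s : Finset ℝ, ↑s ⊆ insert μ S → ∀ c : ℝ → ℂ,
      ∑ x ∈ s.erase μ, ‖c x‖ ^ 2 ≤ A * ∫ t in (0 : ℝ)..T, ‖expSum s c t‖ ^ 2 := by
  obtain ⟨m, hm, hlow⟩ := hlow
  have hε : 0 < T - T' := sub_pos.2 hT
  obtain ⟨κ, hκ, havg⟩ := exists_le_integral_norm_wave_sub_wave_sq hδ hε
  refine ⟨(T - T') * 4 / (m * κ), by positivity, fun s hs c ↦ ?_⟩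
  have hsub : ↑(s.erase μ) ⊆ S := by
    rw [Finset.coe_erase]
    exact Set.sdiff_singleton_subset_iff.2 hs
  set energy := ∫ t in (0 : ℝ)..T, ‖expSum s c t‖ ^ 2
  have hshift : ∀ h ∈ Set.Icc 0 (T - T'),
      m * ∑ x ∈ s.erase μ, ‖c x‖ ^ 2 * ‖wave x h - wave μ h‖ ^ 2 ≤ 4 * energy := by
    intro h hh
    simp_rw [← mul_pow, ← norm_mul]
    exact (hlow _ hsub _).trans
      (integral_norm_expSum_erase_sq_le hh.1 hT' (by linarith [hh.2]) s c μ)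
  have hintegrated := intervalIntegral.integral_mono_on (μ := volume) hε.le
    (Continuous.intervalIntegrable (by fun_prop) _ _) intervalIntegrable_const hshift
  rw [intervalIntegral.integral_const_mul, intervalIntegral.integral_finsetSum fun x _ ↦
    Continuous.intervalIntegrable (by fun_prop) _ _] at hintegrated
  simp only [intervalIntegral.integral_const_mul, intervalIntegral.integral_const, sub_zero,
    smul_eq_mul] at hintegrated
  rw [div_mul_eq_mul_div, le_div_iff₀ (by positivity)]
  calc (∑ x ∈ s.erase μ, ‖c x‖ ^ 2) * (m * κ)
      = m * ∑ x ∈ s.erase μ, ‖c x‖ ^ 2 * κ := by rw [← Finset.sum_mul]; ring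
    _ ≤ m * ∑ x ∈ s.erase μ, ‖c x‖ ^ 2 * ∫ h in (0 : ℝ)..(T - T'), ‖wave x h - wave μ h‖ ^ 2 := by
        gcongr with x hx
        exact havg x μ (hμ x (hsub hx))
    _ ≤ (T - T') * 4 * energy := by linarith

lemma mul_norm_sq_le_integral_add_integral_erase {T : ℝ} (hT : 0 ≤ T) {s : Finset ℝ} {μ : ℝ}
    (hμ : μ ∈ s) (c : ℝ → ℂ) :
    T * ‖c μ‖ ^ 2 ≤ 2 * ((∫ t in (0 : ℝ)..T, ‖expSum s c t‖ ^ 2) +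
      ∫ t in (0 : ℝ)..T, ‖expSum (s.erase μ) c t‖ ^ 2) := by
  have hterm : ∀ t, ‖expSum s c t - expSum (s.erase μ) c t‖ ^ 2 = ‖c μ‖ ^ 2 := fun t ↦ by
    rw [expSum, expSum, ← Finset.add_sum_erase s _ hμ, add_sub_cancel_right, norm_mul, norm_wave,
      mul_one]
  have hsub := integral_norm_sub_sq_le (continuous_expSum s c) (continuous_expSum (s.erase μ) c) hT
  simp_rw [hterm] at hsub
  simpa using hsub

lemma HasRieszLowerBound.insert {S : Set ℝ} {T' T δ μ : ℝ} (hlow : HasRieszLowerBound S T')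
    (hup : HasRieszUpperBound S T) (hT' : 0 ≤ T') (hT : T' < T) (hδ : 0 < δ)
    (hμ : ∀ x ∈ S, δ ≤ |x - μ|) : HasRieszLowerBound (insert μ S) T := by
  obtain ⟨A, hA, herase⟩ := hlow.exists_sum_erase_le hT' hT hδ hμ
  obtain ⟨M, hM, hup⟩ := hup
  have hTpos : 0 < T := hT'.trans_lt hT
  refine ⟨(A + 2 * (1 + M * A) / T)⁻¹, by positivity, fun s hs c ↦ ?_⟩
  rw [inv_mul_le_iff₀ (by positivity), add_mul]
  have hothers := herase s hs c
  set energy := ∫ t in (0 : ℝ)..T, ‖expSum s c t‖ ^ 2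
  have henergy : 0 ≤ energy := intervalIntegral.integral_nonneg hTpos.le fun _ _ ↦ sq_nonneg _
  by_cases hμs : μ ∈ s
  · rw [← Finset.sum_erase_add s _ hμs]
    gcongr
    have hsub : ↑(s.erase μ) ⊆ S := by
      rw [Finset.coe_erase]
      exact Set.sdiff_singleton_subset_iff.2 hs
    have hadded := mul_norm_sq_le_integral_add_integral_erase hTpos.le hμs c
    have hupper : ∫ t in (0 : ℝ)..T, ‖expSum (s.erase μ) c t‖ ^ 2 ≤ M * (A * energy) :=
      (hup _ hsub c).trans (by gcongr)
    rw [div_mul_eq_mul_div, le_div_iff₀ hTpos]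
    linarith
  · rw [Finset.erase_eq_of_notMem hμs] at hothers
    exact hothers.trans (le_add_of_nonneg_right (by positivity))

lemma SeparatedBy.hasRieszLowerBound_union {δ : ℝ} {S F : Set ℝ} (hS : SeparatedBy δ S)
    (hδ : 0 < δ) (hF : F.Finite) {T' T : ℝ} (hT' : 0 < T') (hT : T' < T)
    (hlow : HasRieszLowerBound S T') : HasRieszLowerBound (S ∪ F) T := by
  induction F, hF using Set.Finite.induction_on generalizing T with
  | empty =>
    rw [Set.union_empty]
    exact hlow.mono_time hT'.le hT.le
  | @insert μ F _ hF ih =>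
    obtain ⟨δ₁, hδ₁, hsep₁⟩ := hS.exists_union hδ hF
    rw [Set.union_insert]
    by_cases hμ : μ ∈ S ∪ F
    · rw [Set.insert_eq_of_mem hμ]
      exact ih hT
    · obtain ⟨δ₂, hδ₂, hsep₂⟩ := hsep₁.exists_insert hδ₁ μ
      refine (ih (T := (T' + T) / 2) (by linarith)).insert
        (hsep₁.hasRieszUpperBound hδ₁ (hT'.trans hT)) (by linarith) (by linarith) hδ₂ fun x hx ↦ ?_
      exact hsep₂ (Set.mem_insert_of_mem μ hx) (Set.mem_insert μ _) (ne_of_mem_of_not_mem hx hμ)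

lemma hasRieszLowerBound_of_finite {F : Set ℝ} (hF : F.Finite) {T : ℝ} (hT : 0 < T) :
    HasRieszLowerBound F T := by
  have hempty : HasRieszLowerBound ∅ (T / 2) := by
    refine ⟨1, one_pos, fun s hs c ↦ ?_⟩
    rw [Finset.coe_eq_empty.1 (Set.subset_empty_iff.1 hs)]
    simp [expSum]
  simpa using SeparatedBy.hasRieszLowerBound_union (Set.pairwise_empty _) one_pos hF (half_pos hT)
    (half_lt_self hT) hempty

lemma exists_forall_mul_sum_le_weightedEnergy {F : Set ℝ} (hF : F.Finite) {T : ℝ} (hT : 0 < T) :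
    ∃ m > 0, ∀ (a : ℝ) (s : Finset ℝ), (∀ x ∈ s, x - a ∈ F) → ∀ c : ℝ → ℂ,
      m * ∑ x ∈ s, ‖c x‖ ^ 2 ≤ weightedEnergy T s c := by
  obtain ⟨m, hm, hlow⟩ := hasRieszLowerBound_of_finite hF (half_pos hT)
  refine ⟨T / 4 * (T - T / 4) * m, mul_pos (by nlinarith) hm, fun a s hs c ↦ ?_⟩
  have hmiddle : m * ∑ x ∈ s, ‖c x‖ ^ 2 ≤ ∫ t in (T / 4)..(T - T / 4), ‖expSum s c t‖ ^ 2 := by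
    have himage : ↑(s.image (· - a)) ⊆ F := by
      rw [Finset.coe_image]
      exact Set.image_subset_iff.2 hs
    have hlow := hlow _ himage fun x ↦ c (x + a) * wave (x + a) (T / 4)
    rw [Finset.sum_image sub_left_injective.injOn] at hlow
    simp only [norm_expSum_image_sub s fun x ↦ c x * wave x (T / 4),
      sub_add_cancel, norm_mul, norm_wave, mul_one] at hlow
    rwa [← integral_norm_expSum_sq_translate, zero_add,
      show T / 2 + T / 4 = T - T / 4 by ring] at hlow
  calc T / 4 * (T - T / 4) * m * ∑ x ∈ s, ‖c x‖ ^ 2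
      = T / 4 * (T - T / 4) * (m * ∑ x ∈ s, ‖c x‖ ^ 2) := by ring
    _ ≤ T / 4 * (T - T / 4) * ∫ t in (T / 4)..(T - T / 4), ‖expSum s c t‖ ^ 2 := by
        gcongr
        nlinarith
    _ ≤ weightedEnergy T s c :=
        mul_integral_le_weightedEnergy (by linarith) (by linarith) s c

end AddingFrequencies

section Clusters

open Filter
open scoped ComplexConjugate Pointwise

lemma sum_weightedEnergy_fiber_le {κ : Type*} [DecidableEq κ] {T : ℝ} (hT : 0 ≤ T) (s : Finset ℝ)
    (c : ℝ → ℂ) (cl : ℝ → κ) :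
    ∑ a ∈ s.image cl, weightedEnergy T {x ∈ s | cl x = a} c ≤ weightedEnergy T s c +
      (T ^ 3 + 4 * T) * ∑ x ∈ s, ∑ y ∈ s,
        ‖c x‖ * ‖c y‖ * if cl y = cl x then 0 else (1 + (x - y) ^ 2)⁻¹ := by
  simp_rw [weightedEnergy_eq_sum]
  set G : ℝ → ℝ → ℝ := fun x y ↦ (c x * conj (c y) * quadKernel T (x - y)).re
  have hfiber : ∑ a ∈ s.image cl, ∑ x ∈ s with cl x = a, ∑ y ∈ s with cl y = a, G x y =
      ∑ x ∈ s, ∑ y ∈ s, if cl y = cl x then G x y else 0 := by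
    rw [← Finset.sum_fiberwise_of_maps_to fun x hx ↦ Finset.mem_image_of_mem cl hx]
    refine Finset.sum_congr rfl fun a _ ↦ Finset.sum_congr rfl fun x hx ↦ ?_
    rw [(Finset.mem_filter.1 hx).2, Finset.sum_filter]
  rw [hfiber, Finset.mul_sum, ← Finset.sum_add_distrib]
  refine Finset.sum_le_sum fun x _ ↦ ?_
  rw [Finset.mul_sum, ← Finset.sum_add_distrib]
  refine Finset.sum_le_sum fun y _ ↦ ?_
  split_ifs
  · rw [mul_zero, mul_zero, add_zero]
  · linarith [neg_abs_le (G x y), abs_re_mul_quadKernel_le hT c x y]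

lemma exists_forall_hasRieszLowerBound_of_clusters {κ : Type*} {T δ m : ℝ} (hT : 0 < T)
    (hδ : 0 < δ) (hm : 0 < m) :
    ∃ D > 0, ∀ S : Set ℝ, SeparatedBy δ S → ∀ cl : ℝ → κ,
      (∀ x ∈ S, ∀ y ∈ S, cl x ≠ cl y → D ≤ |x - y|) →
      (∀ (a : κ) (s : Finset ℝ), ↑s ⊆ S → (∀ x ∈ s, cl x = a) → ∀ c : ℝ → ℂ,
        m * ∑ x ∈ s, ‖c x‖ ^ 2 ≤ weightedEnergy T s c) →
      HasRieszLowerBound S T := by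
  classical
  set C := T ^ 3 + 4 * T
  have : 0 < C := by positivity
  obtain ⟨D, hD, hfar⟩ :=
    exists_forall_far_sum_inv_one_add_sq_le hδ (by positivity : 0 < m / (2 * C))
  refine ⟨D, hD, fun S hS cl hcl hcluster ↦ ⟨m / 2 / T ^ 2, by positivity, fun s hs c ↦ ?_⟩⟩
  have hrow : ∀ x ∈ s, ∑ y ∈ s, (if cl y = cl x then 0 else (1 + (x - y) ^ 2)⁻¹) ≤ m / (2 * C) := by
    intro x hx
    simp_rw [← ite_not (cl _ = cl x)]
    rw [← Finset.sum_filter]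
    have hsub : ↑{y ∈ s | cl y ≠ cl x} ⊆ S := fun y hy ↦ hs (Finset.mem_of_mem_filter y hy)
    exact hfar _ (hS.mono hsub) x fun y hy ↦
      hcl x (hs hx) y (hsub hy) (Finset.mem_filter.1 hy).2.symm
  have hschur := sum_mul_mul_le_of_row_sum_le (fun x _ y _ ↦ by split_ifs <;> positivity)
    (fun x _ y _ ↦ if_congr eq_comm rfl (by rw [sub_sq_comm])) hrow fun x ↦ ‖c x‖
  have hdiag : m * ∑ x ∈ s, ‖c x‖ ^ 2 ≤
      ∑ a ∈ s.image cl, weightedEnergy T {x ∈ s | cl x = a} c := by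
    rw [← Finset.sum_fiberwise_of_maps_to fun x hx ↦ Finset.mem_image_of_mem cl hx, Finset.mul_sum]
    exact Finset.sum_le_sum fun a _ ↦ hcluster a _
      (fun x hx ↦ hs (Finset.mem_of_mem_filter x hx)) (fun x hx ↦ (Finset.mem_filter.1 hx).2) c
  have hweighted : m / 2 * ∑ x ∈ s, ‖c x‖ ^ 2 ≤ weightedEnergy T s c := by
    have hoff := mul_le_mul_of_nonneg_left hschur (le_of_lt ‹0 < C›)
    rw [show C * (m / (2 * C) * ∑ x ∈ s, ‖c x‖ ^ 2) = m / 2 * ∑ x ∈ s, ‖c x‖ ^ 2 by field] at hoff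
    linarith [sum_weightedEnergy_fiber_le hT.le s c cl]
  rw [div_mul_eq_mul_div, div_le_iff₀' (by positivity)]
  exact hweighted.trans (weightedEnergy_le hT.le s c)

lemma SeparatedBy.le_abs_add_sub_add {A : Set ℝ} {D R a b u v : ℝ} (hA : SeparatedBy (D + R) A)
    (ha : a ∈ A) (hb : b ∈ A) (hab : a ≠ b) (huv : |u - v| ≤ R) : D ≤ |a + u - (b + v)| := by
  have htri := abs_sub_abs_le_abs_sub (a - b) (v - u)
  rw [show a - b - (v - u) = a + u - (b + v) by ring, abs_sub_comm v u] at htri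
  linarith [hA ha hb hab]

lemma SeparatedBy.add {A F : Set ℝ} {δ R : ℝ} (hA : SeparatedBy (δ + R) A) (hF : SeparatedBy δ F)
    (hR : ∀ u ∈ F, ∀ v ∈ F, |u - v| ≤ R) : SeparatedBy δ (A + F) := by
  rintro _ ⟨a, ha, u, hu, rfl⟩ _ ⟨b, hb, v, hv, rfl⟩ hne
  rcases eq_or_ne a b with rfl | hab
  · have huv : u ≠ v := fun h ↦ hne (h ▸ rfl)
    simpa using hF hu hv huv
  · exact hA.le_abs_add_sub_add ha hb hab (hR u hu v hv)

lemma exists_forall_hasRieszLowerBound_add {F : Set ℝ} (hF : F.Finite) {T : ℝ} (hT : 0 < T) :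
    ∃ D, ∀ A : Set ℝ, SeparatedBy D A →
      ∃ δ > 0, SeparatedBy δ (A + F) ∧ HasRieszLowerBound (A + F) T := by
  obtain ⟨δ, hδ, hFsep⟩ := exists_separatedBy_of_finite hF
  obtain ⟨R, hR⟩ : ∃ R, ∀ u ∈ F, ∀ v ∈ F, |u - v| ≤ R :=
    ⟨Metric.diam F, fun u hu v hv ↦ Metric.dist_le_diam_of_mem hF.isBounded hu hv⟩
  obtain ⟨m, hm, hcluster⟩ := exists_forall_mul_sum_le_weightedEnergy hF hT
  obtain ⟨D, -, hclusters⟩ := exists_forall_hasRieszLowerBound_of_clusters (κ := ℝ) hT hδ hm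
  refine ⟨max D δ + R, fun A hA ↦ ?_⟩
  have hsep : SeparatedBy δ (A + F) :=
    SeparatedBy.add (hA.imp fun _ _ ↦ (add_le_add_left (le_max_right D δ) R).trans) hFsep hR
  have hcentre : ∀ x, ∃ a, x ∈ A + F → a ∈ A ∧ x - a ∈ F := fun x ↦ by
    by_cases hx : x ∈ A + F
    · obtain ⟨a, ha, u, hu, rfl⟩ := hx
      exact ⟨a, fun _ ↦ ⟨ha, by simpa using hu⟩⟩
    · exact ⟨0, fun h ↦ absurd h hx⟩
  choose centre hcentre using hcentre
  refine ⟨δ, hδ, hsep, hclusters _ hsep centre (fun x hx y hy hne ↦ ?_)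
    fun a s hs ha c ↦ hcluster a s (fun x hx ↦ ha x hx ▸ (hcentre x (hs hx)).2) c⟩
  have hdist := hA.le_abs_add_sub_add (hcentre x hx).1 (hcentre y hy).1 hne
    (hR _ (hcentre x hx).2 _ (hcentre y hy).2)
  rw [add_sub_cancel, add_sub_cancel] at hdist
  exact (le_max_left D δ).trans hdist

/-- The distances between distinct points of `A` tend to infinity, expressed by saying that `A` is
separated by any given `D` outside a finite set. -/
def GapsTendToInfinity (A : Set ℝ) : Prop := ∀ D, ∃ E : Set ℝ, E.Finite ∧ SeparatedBy D (A \ E)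

theorem GapsTendToInfinity.hasRieszBounds_add {A F : Set ℝ} (hA : GapsTendToInfinity A)
    (hF : F.Finite) {T : ℝ} (hT : 0 < T) :
    HasRieszLowerBound (A + F) T ∧ HasRieszUpperBound (A + F) T := by
  obtain ⟨D, hD⟩ := exists_forall_hasRieszLowerBound_add hF (half_pos hT)
  obtain ⟨E, hE, hAE⟩ := hA D
  obtain ⟨δ, hδ, hsep, hlow⟩ := hD _ hAE
  obtain ⟨δ', hδ', hsep'⟩ := hsep.exists_union hδ (hE.add hF)
  have hcover : A + F ⊆ A \ E + F ∪ (E + F) := by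
    rw [← Set.union_add, Set.sdiff_union_self]
    exact Set.add_subset_add_right Set.subset_union_left
  exact ⟨(hsep.hasRieszLowerBound_union hδ (hE.add hF) (half_pos hT) (half_lt_self hT)
    hlow).mono_set hcover, SeparatedBy.hasRieszUpperBound (hsep'.mono hcover) hδ' hT⟩

lemma le_sub_of_forall_le_succ_sub {L : ℕ → ℝ} {D : ℝ} {N n k : ℕ} (hD : 0 ≤ D)
    (h : ∀ i ≥ N, D ≤ L (i + 1) - L i) (hn : N ≤ n) (hnk : n < k) : D ≤ L k - L n := by
  induction k, hnk using Nat.le_induction with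
  | base => exact h n hn
  | succ k hk ih => linarith [h k (by lia)]

lemma gapsTendToInfinity_range_union_range_neg {L : ℕ → ℝ}
    (hL : Tendsto (fun n ↦ L (n + 1) - L n) atTop atTop) :
    GapsTendToInfinity (Set.range L ∪ Set.range fun n ↦ -L n) := by
  intro D
  have hLtop : Tendsto L atTop atTop :=
    tendsto_atTop_of_eventually_le_sub one_pos (hL.eventually_ge_atTop 1)
  obtain ⟨N, hN⟩ := eventually_atTop.1
    ((hL.eventually_ge_atTop |D|).and (hLtop.eventually_ge_atTop |D|))
  have hgap : ∀ n k, N ≤ n → N ≤ k → L n ≠ L k → |D| ≤ |L n - L k| := by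
    intro n k hn hk hne
    rcases lt_trichotomy n k with h | rfl | h
    · rw [abs_sub_comm]
      exact (le_sub_of_forall_le_succ_sub (abs_nonneg D) (fun i hi ↦ (hN i hi).1) hn h).trans
        (le_abs_self _)
    · exact absurd rfl hne
    · exact (le_sub_of_forall_le_succ_sub (abs_nonneg D) (fun i hi ↦ (hN i hi).1) hk h).trans
        (le_abs_self _)
  refine ⟨L '' Set.Iio N ∪ (fun n ↦ -L n) '' Set.Iio N,
    ((Set.finite_Iio N).image _).union ((Set.finite_Iio N).image _), ?_⟩
  have htail : ∀ {f : ℕ → ℝ} {n : ℕ}, f n ∉ f '' Set.Iio N → N ≤ n := fun hn ↦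
    not_lt.1 fun h ↦ hn (Set.mem_image_of_mem _ h)
  rintro _ ⟨⟨n, rfl⟩ | ⟨n, rfl⟩, hn⟩ _ ⟨⟨k, rfl⟩ | ⟨k, rfl⟩, hk⟩ hne <;>
    rw [Set.mem_union, not_or] at hn hk
  · exact (le_abs_self D).trans (hgap n k (htail hn.1) (htail hk.1) hne)
  · have := (hN n (htail hn.1)).2
    have := (hN k (htail hk.2)).2
    exact le_abs.2 (.inl (by linarith [le_abs_self D, abs_nonneg D]))
  · have := (hN n (htail hn.2)).2
    have := (hN k (htail hk.1)).2
    exact le_abs.2 (.inr (by linarith [le_abs_self D, abs_nonneg D]))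
  · have hgap := hgap n k (htail hn.2) (htail hk.2) fun h ↦ hne (by simp only [h])
    rw [neg_sub_neg, abs_sub_comm]
    exact (le_abs_self D).trans hgap

end Clusters

section OddExtension

open scoped Pointwise

lemma exists_riesz_bounds_tsum {ι : Type*} {S : Set ℝ} {T : ℝ} (hlow : HasRieszLowerBound S T)
    (hup : HasRieszUpperBound S T) {freq : ι → ℝ} {J : Set ι} (hinj : Set.InjOn freq J)
    (hmem : Set.MapsTo freq J S) :
    ∃ m M : ℝ, 0 < m ∧ m ≤ M ∧
      ∀ c : ι → ℂ, (Function.support c).Finite → Function.support c ⊆ J →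
        m * ∑' k, ‖c k‖ ^ 2 ≤
          (∫ t in (0 : ℝ)..T, ‖∑' k, c k * exp (I * (freq k : ℂ) * (t : ℂ))‖ ^ 2) ∧
        (∫ t in (0 : ℝ)..T, ‖∑' k, c k * exp (I * (freq k : ℂ) * (t : ℂ))‖ ^ 2) ≤
          M * ∑' k, ‖c k‖ ^ 2 := by
  obtain ⟨m, hm, hlow⟩ := hlow
  obtain ⟨M, -, hup⟩ := hup
  refine ⟨m, max m M, hm, le_max_left m M, fun c hc hcJ ↦ ?_⟩
  obtain ⟨s, hs, d, hcoeff, hsum⟩ := exists_expSum_eq_tsum hc (hinj.mono hcJ) (hmem.mono_left hcJ)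
  simp_rw [hcoeff, hsum]
  refine ⟨hlow s hs d, (hup s hs d).trans ?_⟩
  gcongr
  exact le_max_right m M

variable {ω : ℕ → ℝ} {ωZ : ℤ → ℝ}

lemma injOn_compl_zero_of_odd_extension (hpos : ∀ k, 1 ≤ k → 0 < ω k)
    (hmono : ∀ k, 1 ≤ k → ω k < ω (k + 1)) (hωZ_pos : ∀ k : ℕ, 1 ≤ k → ωZ k = ω k)
    (hωZ_neg : ∀ k : ℕ, 1 ≤ k → ωZ (-k) = -ω k) : Set.InjOn ωZ {0}ᶜ := by
  have hinj : Set.InjOn ω (Set.Ici 1) :=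
    (strictMonoOn_of_lt_add_one Set.ordConnected_Ici fun k _ hk _ ↦ hmono k hk).injOn
  intro k hk l hl h
  obtain ⟨n, hn⟩ := Int.eq_nat_or_neg k
  obtain ⟨q, hq⟩ := Int.eq_nat_or_neg l
  have hn₁ : 1 ≤ n := Nat.one_le_iff_ne_zero.2 fun h₀ ↦ hk (by simp_all)
  have hq₁ : 1 ≤ q := Nat.one_le_iff_ne_zero.2 fun h₀ ↦ hl (by simp_all)
  have hωn := hpos n hn₁
  have hωq := hpos q hq₁
  rcases hn with rfl | rfl <;> rcases hq with rfl | rfl <;>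
    simp only [hωZ_pos _ hn₁, hωZ_pos _ hq₁, hωZ_neg _ hn₁, hωZ_neg _ hq₁, neg_inj] at h
  · rw [hinj hn₁ hq₁ h]
  · linarith
  · linarith
  · rw [hinj hn₁ hq₁ h]

lemma mapsTo_compl_zero_add_of_odd_extension {L : ℕ → ℝ} {P : Set ℕ}
    (hmem : ∀ k, 1 ≤ k → ∃ p ∈ P, ∃ n, ω k = L n - L p)
    (hωZ_pos : ∀ k : ℕ, 1 ≤ k → ωZ k = ω k) (hωZ_neg : ∀ k : ℕ, 1 ≤ k → ωZ (-k) = -ω k) :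
    Set.MapsTo ωZ {0}ᶜ ((Set.range L ∪ Set.range fun n ↦ -L n) +
      ((fun p ↦ -L p) '' P ∪ L '' P)) := by
  intro k hk
  obtain ⟨q, hq⟩ := Int.eq_nat_or_neg k
  have hq₁ : 1 ≤ q := Nat.one_le_iff_ne_zero.2 fun h₀ ↦ hk (by simp_all)
  obtain ⟨p, hp, n, hωq⟩ := hmem q hq₁
  rcases hq with rfl | rfl
  · rw [hωZ_pos q hq₁, hωq, sub_eq_add_neg]
    exact Set.add_mem_add (.inl ⟨n, rfl⟩) (.inl ⟨p, hp, rfl⟩)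
  · rw [hωZ_neg q hq₁, hωq, neg_sub', sub_neg_eq_add]
    exact Set.add_mem_add (.inr ⟨n, rfl⟩) (.inr ⟨p, hp, rfl⟩)

end OddExtension

theorem stmt10_general {ν : ℕ} {j : ℕ → ℝ} (hj : IsBesselZeroSeq ν j)
    {P : Set ℕ} (hP : P.Finite) (hP_pos : ∀ p ∈ P, 1 ≤ p)
    {ω : ℕ → ℝ} (hω_mono : ∀ k, 1 ≤ k → ω k < ω (k + 1))
    (hω_mem : ∀ k, 1 ≤ k → ω k ∈ {x : ℝ | ∃ p ∈ P, ∃ n, p + 1 ≤ n ∧ x = j n ^ 2 - j p ^ 2})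
    {ωZ : ℤ → ℝ} (hωZ_pos : ∀ k : ℕ, 1 ≤ k → ωZ k = ω k)
    (hωZ_neg : ∀ k : ℕ, 1 ≤ k → ωZ (-k) = -ω k) {T : ℝ} (hT : 0 < T) :
    ∃ m M : ℝ, 0 < m ∧ m ≤ M ∧
      ∀ c : ℤ → ℂ, (Function.support c).Finite → c 0 = 0 →
        m * ∑' k : ℤ, ‖c k‖ ^ 2 ≤
          (∫ t in (0 : ℝ)..T, ‖∑' k : ℤ, c k * exp (I * (ωZ k : ℂ) * (t : ℂ))‖ ^ 2) ∧
        (∫ t in (0 : ℝ)..T, ‖∑' k : ℤ, c k * exp (I * (ωZ k : ℂ) * (t : ℂ))‖ ^ 2) ≤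
          M * ∑' k : ℤ, ‖c k‖ ^ 2 := by
  obtain ⟨hlow, hup⟩ := (gapsTendToInfinity_range_union_range_neg
    (L := fun n ↦ j n ^ 2) hj.tendsto_sq_sub_sq).hasRieszBounds_add
      ((hP.image fun p ↦ -j p ^ 2).union (hP.image fun p ↦ j p ^ 2)) hT
  have hω_pos : ∀ k, 1 ≤ k → 0 < ω k := fun k hk ↦ by
    obtain ⟨p, hp, n, hpn, hω⟩ := hω_mem k hk
    exact hω ▸ sub_pos.2 (hj.sq_lt_sq (hP_pos p hp) hpn)
  have hω_mem' : ∀ k, 1 ≤ k → ∃ p ∈ P, ∃ n, ω k = j n ^ 2 - j p ^ 2 := fun k hk ↦ by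
    obtain ⟨p, hp, n, -, hω⟩ := hω_mem k hk
    exact ⟨p, hp, n, hω⟩
  obtain ⟨m, M, hm, hmM, hbounds⟩ := exists_riesz_bounds_tsum hlow hup
    (injOn_compl_zero_of_odd_extension hω_pos hω_mono hωZ_pos hωZ_neg)
    (mapsTo_compl_zero_add_of_odd_extension (L := fun n ↦ j n ^ 2) hω_mem' hωZ_pos hωZ_neg)
  exact ⟨m, M, hm, hmM, fun c hc hc₀ ↦ hbounds c hc (Set.subset_compl_singleton_iff.2 (by simpa))⟩

/-- With `(j_{0,k})_{k≥1}` the increasing enumeration of the positive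
zeros of `J_0`, `(ω_k)_{k≥1}` the increasing enumeration of
`{j_{0,n}² - j_{0,p}² : p ∈ {1,2,3}, n ≥ p+1}` and `ω_{-k} := -ω_k`, for every `T > 0`
there are `0 < m ≤ M` with
`m ∑_{k≠0} |c_k|² ≤ ∫_0^T |∑_{k≠0} c_k e^{iω_k t}|² dt ≤ M ∑_{k≠0} |c_k|²` for every
finitely supported family `(c_k)_{k ∈ ℤ, k ≠ 0}` of complex numbers. -/
theorem stmt10 (j : ℕ → ℝ)
    (hj_pos : ∀ k, 1 ≤ k → 0 < j k)
    (hj_mono : ∀ k l, 1 ≤ k → k < l → j k < j l)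
    (hj_zero : ∀ k, 1 ≤ k → besselJ 0 (j k) = 0)
    (hj_surj : ∀ x : ℝ, 0 < x → besselJ 0 x = 0 → ∃ k, 1 ≤ k ∧ j k = x)
    (ω : ℕ → ℝ)
    (hω_mono : ∀ k, 1 ≤ k → ω k < ω (k + 1))
    (hω_mem : ∀ k, 1 ≤ k → ω k ∈
      {x : ℝ | ∃ p ∈ ({1, 2, 3} : Set ℕ), ∃ n, p + 1 ≤ n ∧ x = (j n) ^ 2 - (j p) ^ 2})
    (hω_surj : ∀ x ∈
      {x : ℝ | ∃ p ∈ ({1, 2, 3} : Set ℕ), ∃ n, p + 1 ≤ n ∧ x = (j n) ^ 2 - (j p) ^ 2},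
      ∃ k, 1 ≤ k ∧ ω k = x)
    (ωZ : ℤ → ℝ)
    (hωZ_pos : ∀ k : ℕ, 1 ≤ k → ωZ (k : ℤ) = ω k)
    (hωZ_neg : ∀ k : ℕ, 1 ≤ k → ωZ (-(k : ℤ)) = -ω k)
    (T : ℝ) (hT : 0 < T) :
    ∃ m M : ℝ, 0 < m ∧ m ≤ M ∧
      ∀ c : ℤ → ℂ, (Function.support c).Finite → c 0 = 0 →
        m * ∑' k : ℤ, ‖c k‖ ^ 2 ≤
          (∫ t in (0 : ℝ)..T,
            ‖∑' k : ℤ, c k * Complex.exp (Complex.I * (ωZ k : ℂ) * (t : ℂ))‖ ^ 2) ∧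
        (∫ t in (0 : ℝ)..T,
            ‖∑' k : ℤ, c k * Complex.exp (Complex.I * (ωZ k : ℂ) * (t : ℂ))‖ ^ 2) ≤
          M * ∑' k : ℤ, ‖c k‖ ^ 2 :=
  stmt10_general ⟨hj_pos, hj_mono, hj_zero, hj_surj⟩ (P := {1, 2, 3}) (Set.toFinite _)
    (by simp) hω_mono hω_mem hωZ_pos hωZ_neg hT
end
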